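/- Let q > 1 be an odd integer and let d(q) denote the number of positive divisors of q. If the smallest prime factor of q is at least d(q), then the Erdős conjecture is true mod q. -/

import Mathlib

open Filter Topology Finset

/-- `f : ℕ → ℤ` is Erdősian mod `q`: periodic with period `q`, takes values `±1`
off multiples of `q`, and `0` on multiples of `q`. -/
def IsErdosian (q : ℕ) (f : ℕ → ℤ) : Prop :=
  (∀ n : ℕ, 1 ≤ n → f (n + q) = f n) ∧
  (∀ n : ℕ, 1 ≤ n → ¬ q ∣ n → f n = 1 ∨ f n = -1) ∧
  (∀ n : ℕ, 1 ≤ n → q ∣ n → f n = 0)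

/-- The Erdős conjecture is false mod `q`: there is an Erdősian function mod `q`
whose partial sums `∑_{n=1}^N f(n)/n` tend to `0`. -/
def ErdosConjectureFalse (q : ℕ) : Prop :=
  ∃ f : ℕ → ℤ, IsErdosian q f ∧
    Tendsto (fun N : ℕ => ∑ n ∈ Finset.Icc 1 N, (f n : ℝ) / n) atTop (nhds 0)

/-- The Erdős conjecture holds (is true) mod `q`. -/
def ErdosConjectureHolds (q : ℕ) : Prop := ¬ ErdosConjectureFalse q

namespace ErdosBaker
open NumberField

lemma siegel (K : Type) [Field K] [NumberField K] : ∃ C : ℝ, 1 ≤ C ∧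
    ∀ (α β : Type) [Fintype α] [Fintype β] (a : Matrix α β (𝓞 K)) (A : ℝ), a ≠ 0 →
      0 < Fintype.card α → 2 * Fintype.card α ≤ Fintype.card β → 1 ≤ A →
      (∀ k l, house (algebraMap (𝓞 K) K (a k l)) ≤ A) →
      ∃ ξ : β → 𝓞 K, ξ ≠ 0 ∧ (∀ k, ∑ l, a k l * ξ l = 0) ∧
        ∀ l, house (ξ l : K) ≤ C * (C * Fintype.card β * A) := by
  classical
  have key : ∃ c : ℝ, ∀ (α β : Type) [Fintype α] [Fintype β] (a : Matrix α β (𝓞 K)) (A : ℝ), a ≠ 0 →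
      0 < Fintype.card α → Fintype.card α < Fintype.card β →
      (∀ k l, house (algebraMap (𝓞 K) K (a k l)) ≤ A) →
      ∃ ξ : β → 𝓞 K, ξ ≠ 0 ∧ a.mulVec ξ = 0 ∧
        ∀ l, house (ξ l : K) ≤ c * ((c * Fintype.card β * A) ^
          ((Fintype.card α : ℝ) / (Fintype.card β - Fintype.card α))) :=
    ⟨_, fun α β _ _ a A ha h0 h1 hA =>
      house.exists_ne_zero_int_vec_house_le K a ha h0 h1 rfl hA rfl⟩
  obtain ⟨c, hc⟩ := key
  refine ⟨max 1 |c|, le_max_left _ _, fun α β _ _ a A ha h0 h1 hA1 hA => ?_⟩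
  obtain ⟨ξ, h2, h3, h4⟩ := hc α β a A ha h0 (by omega) hA
  refine ⟨ξ, h2, fun k => by simpa [Matrix.mulVec, dotProduct] using congrFun h3 k, fun l => (h4 l).trans ?_⟩
  set C := max 1 |c|
  have hC1 : (1:ℝ) ≤ C := le_max_left _ _
  have hCc : |c| ≤ C := le_max_right _ _
  set p := Fintype.card α
  set q := Fintype.card β
  have hq : (1:ℝ) ≤ q := by exact_mod_cast (by omega : 1 ≤ q)
  have hpq : (2:ℝ) * p ≤ q := by exact_mod_cast h1
  have hp : (0:ℝ) < p := by exact_mod_cast h0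
  have hy0 : 0 ≤ (p:ℝ) / (q - p) := by
    apply div_nonneg <;> linarith
  have hy1 : (p:ℝ) / (q - p) ≤ 1 := by
    rw [div_le_one (by linarith)]; linarith
  have hx1 : 1 ≤ C * q * A := by
    have := one_le_mul_of_one_le_of_one_le hC1 hq
    exact one_le_mul_of_one_le_of_one_le this hA1
  calc c * (c * q * A) ^ ((p:ℝ) / (q - p)) ≤ |c * (c * q * A) ^ ((p:ℝ) / (q - p))| := le_abs_self _
    _ = |c| * |(c * q * A) ^ ((p:ℝ) / (q - p))| := abs_mul _ _
    _ ≤ C * (C * q * A) := by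
      refine mul_le_mul hCc ?_ (abs_nonneg _) (by linarith)
      refine (Real.abs_rpow_le_abs_rpow _ _).trans ?_
      have h5 : |c * q * A| ≤ C * q * A := by
        rw [abs_mul, abs_mul, abs_of_nonneg (by linarith : (0:ℝ) ≤ q), abs_of_nonneg (by linarith : 0 ≤ A)]
        gcongr
      refine (Real.rpow_le_rpow (abs_nonneg _) h5 hy0).trans ?_
      calc (C * q * A) ^ ((p:ℝ) / (q - p)) ≤ (C * q * A) ^ (1:ℝ) :=
            Real.rpow_le_rpow_of_exponent_le hx1 hy1
        _ = _ := Real.rpow_one _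

lemma liouville {K : Type} [Field K] [NumberField K] (σ : K →+* ℂ) (x : 𝓞 K) (hx : x ≠ 0)
    (B : ℝ) (hB : house (x : K) ≤ B) : 1 ≤ ‖σ x‖ * B ^ (Module.finrank ℚ K - 1) := by
  have h1 := norm_norm_le_norm_mul_house_pow (x : K) σ
  have h2 : (1:ℝ) ≤ ‖Algebra.norm ℚ (x : K)‖ := by
    have h3 : Algebra.norm ℤ x ≠ 0 := Algebra.norm_ne_zero_iff.mpr hx
    have h4 : Algebra.norm ℚ (x : K) = (Algebra.norm ℤ x : ℚ) := (Algebra.coe_norm_int x).symm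
    rw [h4]
    have : (1:ℝ) ≤ |(Algebra.norm ℤ x : ℤ)| := by exact_mod_cast Int.one_le_abs h3
    simpa [Int.norm_eq_abs] using this
  refine h2.trans (h1.trans ?_)
  gcongr
  exact house_nonneg _

/-- division by a power -/
lemma exists_div_pow (f : ℂ → ℂ) (hf : Differentiable ℂ f) (a : ℂ) (M : ℕ)
    (h : (M : ℕ∞) ≤ analyticOrderAt f a) :
    ∃ g : ℂ → ℂ, Differentiable ℂ g ∧ ∀ z, f z = (z - a) ^ M * g z := by
  induction M generalizing f with
  | zero => exact ⟨f, hf, by simp⟩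
  | succ M ih =>
    have hfa : f a = 0 := by
      apply apply_eq_zero_of_analyticOrderAt_ne_zero
      intro h0
      rw [h0] at h
      simp at h
    have hd : Differentiable ℂ (dslope f a) := by
      rw [← differentiableOn_univ] at hf ⊢
      exact (Complex.differentiableOn_dslope univ_mem).2 hf
    have hfz : ∀ z, f z = (z - a) * dslope f a z := by
      intro z
      have := sub_smul_dslope f a z
      simp only [smul_eq_mul, hfa, sub_zero] at this
      exact this.symm
    have hord : analyticOrderAt f a = 1 + analyticOrderAt (dslope f a) a := by
      have : f = (fun z => z - a) * dslope f a := by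
        ext z; simp [hfz z]
      conv_lhs => rw [this]
      rw [analyticOrderAt_mul (by fun_prop) (hd.analyticAt a)]
      congr 1
      exact analyticOrderAt_id_sub_const_self
    rw [hord] at h
    obtain ⟨g, hg, hg2⟩ := ih (dslope f a) hd (by
      have h' : (1:ℕ∞) + (M:ℕ∞) ≤ 1 + analyticOrderAt (dslope f a) a := by
        rw [add_comm]; exact_mod_cast h
      exact (ENat.add_le_add_iff_left (by simp)).1 h')
    exact ⟨g, hg, fun z => by rw [hfz, hg2]; ring⟩

lemma exists_div_prod (s : Finset ℕ) (M : ℕ) (f : ℂ → ℂ) (hf : Differentiable ℂ f)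
    (h : ∀ l ∈ s, (M : ℕ∞) ≤ analyticOrderAt f (l : ℂ)) :
    ∃ g : ℂ → ℂ, Differentiable ℂ g ∧ ∀ z, f z = (∏ l ∈ s, (z - l) ^ M) * g z := by
  induction s using Finset.induction_on generalizing f with
  | empty => exact ⟨f, hf, by simp⟩
  | insert a s ha ih =>
    obtain ⟨g, hg, hg2⟩ := exists_div_pow f hf a M (h a (by simp))
    have hord : ∀ l ∈ s, (M : ℕ∞) ≤ analyticOrderAt g (l : ℂ) := by
      intro l hl
      have h1 := h l (by simp [hl])
      have hla : (l : ℂ) ≠ a := by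
        intro hh; exact ha (by exact_mod_cast (Nat.cast_injective hh) ▸ hl)
      have : f = (fun z : ℂ => (z - a) ^ M) * g := by ext z; simp [hg2 z]
      rw [this, analyticOrderAt_mul (by fun_prop) (hg.analyticAt _)] at h1
      have h0 : analyticOrderAt (fun z : ℂ => (z - a) ^ M) (l : ℂ) = 0 := by
        rw [AnalyticAt.analyticOrderAt_eq_zero (by fun_prop)]
        exact pow_ne_zero _ (sub_ne_zero.2 hla)
      simpa [h0] using h1
    obtain ⟨k, hk, hk2⟩ := ih g hg hord
    exact ⟨k, hk, fun z => by rw [hg2, hk2, Finset.prod_insert ha]; ring⟩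

/-- Schwarz lemma. -/
lemma schwarz (f : ℂ → ℂ) (hf : Differentiable ℂ f) (S S' M : ℕ) (hS : S ≤ S') (hS' : 0 < S')
    (h : ∀ l < S, ∀ i < M, iteratedDeriv i f (l : ℂ) = 0) (B : ℝ)
    (hB : ∀ z : ℂ, ‖z‖ ≤ 4 * S' → ‖f z‖ ≤ B) (l' : ℕ) (hl' : l' < S') :
    ‖f l'‖ ≤ B * Real.exp (-(M * S : ℝ)) := by
  obtain ⟨g, hg, hg2⟩ := exists_div_prod (Finset.range S) M f hf (by
    intro l hl
    rw [natCast_le_analyticOrderAt_iff_iteratedDeriv_eq_zero (hf.analyticAt _)]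
    exact fun i hi => h l (Finset.mem_range.1 hl) i hi)
  have hS'r : (0:ℝ) < S' := by exact_mod_cast hS'
  have hB0 : 0 ≤ B := (norm_nonneg _).trans (hB 0 (by simp))
  have hgB : ∀ z ∈ frontier (Metric.ball (0:ℂ) (4 * S')), ‖g z‖ ≤ B / (3 * S') ^ (M * S) := by
    intro z hz
    rw [frontier_ball _ (by positivity), mem_sphere_zero_iff_norm] at hz
    rw [le_div_iff₀ (by positivity)]
    refine le_trans ?_ (hB z hz.le)
    rw [hg2 z, norm_mul, mul_comm]
    gcongr
    rw [norm_prod]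
    calc (3 * (S':ℝ)) ^ (M * S) = ∏ l ∈ Finset.range S, (3 * (S':ℝ)) ^ M := by
          simp [pow_mul]
      _ ≤ _ := by
        apply Finset.prod_le_prod
        · intros; positivity
        · intro l hl
          rw [norm_pow]
          gcongr
          have h1 := norm_sub_norm_le z (l : ℂ)
          have h2 : (l:ℝ) ≤ S' := by exact_mod_cast (Finset.mem_range.1 hl).le.trans hS
          simp only [Complex.norm_natCast] at h1
          linarith
  have hmem : (l' : ℂ) ∈ closure (Metric.ball (0:ℂ) (4 * S')) := by
    apply subset_closure
    have : (l':ℝ) < S' := by exact_mod_cast hl'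
    simp
    linarith
  have h1 := Complex.norm_le_of_forall_mem_frontier_norm_le Metric.isBounded_ball
    hg.diffContOnCl hgB hmem
  rw [hg2, norm_mul, norm_prod]
  have h2 : ∏ l ∈ Finset.range S, ‖((l':ℂ) - l) ^ M‖ ≤ (S':ℝ) ^ (M * S) := by
    calc _ ≤ ∏ l ∈ Finset.range S, (S':ℝ) ^ M := by
          apply Finset.prod_le_prod
          · intros; positivity
          · intro l hl
            rw [norm_pow]
            gcongr
            have h2 : (l:ℤ) < S' := by exact_mod_cast (Finset.mem_range.1 hl).trans_le hS
            have h3 : |(l' : ℤ) - l| ≤ S' := by rw [abs_le]; constructor <;> omega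
            have : ((l':ℂ) - l) = (((l':ℤ) - l : ℤ) : ℂ) := by push_cast; ring
            rw [this, Complex.norm_intCast]
            exact_mod_cast h3
      _ = _ := by simp [pow_mul]
  calc _ ≤ (S':ℝ) ^ (M * S) * (B / (3 * S') ^ (M * S)) := by gcongr
    _ = B * (1/3)^(M*S) := by
      rw [mul_pow, div_pow, one_pow]; field_simp
    _ ≤ _ := by
      gcongr
      have : Real.exp (-(M * S : ℝ)) = (Real.exp (-1)) ^ (M * S) := by
        rw [← Real.exp_nat_mul]; push_cast; ring_nf
      rw [this]
      gcongr
      rw [Real.exp_neg, one_div]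
      gcongr
      exact Real.exp_one_lt_three.le
end ErdosBaker

namespace ErdosBaker
open NumberField

section extrap
variable {K : Type} [Field K] [NumberField K] (σ : K →+* ℂ) {κ ι : Type} [Fintype κ] [Fintype ι]
  (γ : ι → κ → 𝓞 K) (e : ι → 𝓞 K) (w : ι → ℂ) (lam : κ → ℂ) (p : ι → 𝓞 K)

/-- coefficient -/
noncomputable def coef (τ : κ → ℕ) (l : ℕ) (u : ι) : 𝓞 K := (∏ i, γ u i ^ τ i) * e u ^ l

/-- value -/
noncomputable def val (τ : κ → ℕ) (l : ℕ) : 𝓞 K := ∑ u, coef γ e τ l u * p u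

/-- auxiliary function -/
noncomputable def phi (τ : κ → ℕ) (z : ℂ) : ℂ :=
  ∑ u, (σ (p u) * ∏ i, σ (γ u i) ^ τ i) * Complex.exp (w u * z)

lemma phi_nat (he : ∀ u, Complex.exp (w u) = σ (e u)) (τ : κ → ℕ) (l : ℕ) :
    phi σ γ w p τ l = σ (val γ e p τ l) := by
  simp only [phi, val, coef, map_sum, map_mul, map_prod, map_pow]
  refine Finset.sum_congr rfl fun u _ => ?_
  rw [mul_comm (w u), Complex.exp_nat_mul, he]
  ring

lemma phi_iter (τ : κ → ℕ) (k : ℕ) :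
    iteratedDeriv k (phi σ γ w p τ) = fun z =>
      ∑ u, (σ (p u) * ∏ i, σ (γ u i) ^ τ i) * w u ^ k * Complex.exp (w u * z) := by
  induction k with
  | zero => ext z; simp [phi]
  | succ k ih =>
    rw [iteratedDeriv_succ, ih]
    ext z
    have : HasDerivAt (fun z => ∑ u, (σ (p u) * ∏ i, σ (γ u i) ^ τ i) * w u ^ k * Complex.exp (w u * z))
      (∑ u, (σ (p u) * ∏ i, σ (γ u i) ^ τ i) * w u ^ k * (Complex.exp (w u * z) * (w u * 1))) z := by
      apply HasDerivAt.fun_sum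
      intro u _
      exact (((hasDerivAt_id z).const_mul (w u)).cexp).const_mul _
    rw [this.deriv]
    refine Finset.sum_congr rfl fun u _ => ?_
    ring

lemma phi_diff (τ : κ → ℕ) : Differentiable ℂ (phi σ γ w p τ) := by
  unfold phi; fun_prop

lemma vanish (he : ∀ u, Complex.exp (w u) = σ (e u)) (hw : ∀ u, w u = ∑ i, σ (γ u i) * lam i)
    (T l : ℕ) (h : ∀ τ : κ → ℕ, (∀ i, τ i < T) → val γ e p τ l = 0) (k : ℕ) (τ : κ → ℕ)
    (hτ : ∀ i, τ i + k < T) :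
    ∑ u, (σ (p u) * ∏ i, σ (γ u i) ^ τ i) * w u ^ k * Complex.exp (w u * l) = 0 := by
  classical
  induction k generalizing τ with
  | zero =>
    have := phi_nat σ γ e w p he τ l
    rw [h τ (by simpa using hτ)] at this
    simpa [phi] using this
  | succ k ih =>
    have h1 : ∀ u, (σ (p u) * ∏ i, σ (γ u i) ^ τ i) * w u ^ (k+1) * Complex.exp (w u * l)
      = ∑ j, lam j * ((σ (p u) * ∏ i, σ (γ u i) ^ (Function.update τ j (τ j + 1) i)) * w u ^ k
        * Complex.exp (w u * l)) := by
      intro u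
      have h2 : ∀ j, ∏ i, σ (γ u i) ^ (Function.update τ j (τ j + 1) i)
          = (∏ i, σ (γ u i) ^ τ i) * σ (γ u j) := by
        intro j
        rw [← Finset.mul_prod_erase univ _ (Finset.mem_univ j),
          ← Finset.mul_prod_erase univ (fun i => σ (γ u i) ^ τ i) (Finset.mem_univ j)]
        rw [Function.update_self, pow_succ]
        rw [Finset.prod_congr rfl (fun i hi => by
          rw [Function.update_of_ne (Finset.ne_of_mem_erase hi)])]
        ring
      simp only [h2]
      rw [pow_succ]
      conv_lhs => rw [show w u ^ k * w u = w u ^ k * ∑ i, σ (γ u i) * lam i from by rw [← hw]]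
      rw [Finset.mul_sum, Finset.mul_sum, Finset.sum_mul]
      refine Finset.sum_congr rfl fun j _ => ?_
      ring
    simp only [h1]
    rw [Finset.sum_comm]
    refine Finset.sum_eq_zero fun j _ => ?_
    rw [← Finset.mul_sum, ih, mul_zero]
    intro i
    by_cases hij : i = j
    · subst hij; have := hτ i; simp; omega
    · rw [Function.update_of_ne hij]; have := hτ i; omega

lemma house_prod_le' {ι' : Type} (s : Finset ι') (f : ι' → K) :
    house (∏ x ∈ s, f x) ≤ ∏ x ∈ s, house (f x) := by
  classical
  induction s using Finset.induction_on with
  | empty => simpa using (by simpa using house_intCast (K := K) 1 : house (1:K) = 1).le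
  | insert a s ha ih =>
    rw [Finset.prod_insert ha, Finset.prod_insert ha]
    refine (house_mul_le _ _).trans ?_
    gcongr
    exact house_nonneg _

lemma house_coef (G Eb : ℝ) (hG1 : 1 ≤ G) (hE1 : 1 ≤ Eb) (hG : ∀ u i, house (γ u i : K) ≤ G)
    (hE : ∀ u, house (e u : K) ≤ Eb) (T S : ℕ) (τ : κ → ℕ) (hτ : ∀ i, τ i ≤ T) (l : ℕ) (hl : l ≤ S)
    (u : ι) : house (coef γ e τ l u : K) ≤ G ^ (Fintype.card κ * T) * Eb ^ S := by
  simp only [coef, map_mul, map_prod, map_pow]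
  refine (house_mul_le _ _).trans ?_
  gcongr
  · exact house_nonneg _
  · refine (house_prod_le' _ _).trans ?_
    calc _ ≤ ∏ i : κ, G ^ T := by
          apply Finset.prod_le_prod
          · intros; exact house_nonneg _
          · intro i _
            refine (house_pow_le _ _).trans ?_
            calc _ ≤ G ^ (τ i) := by
                  gcongr
                  · exact house_nonneg _
                  · exact hG u i
              _ ≤ _ := pow_le_pow_right₀ hG1 (hτ i)
      _ = _ := by simp [mul_comm _ T, pow_mul]
  · refine (house_pow_le _ _).trans ?_
    calc _ ≤ Eb ^ l := by
          gcongr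
          · exact house_nonneg _
          · exact hE u
      _ ≤ _ := pow_le_pow_right₀ hE1 hl

lemma extrapolate (he : ∀ u, Complex.exp (w u) = σ (e u)) (hw : ∀ u, w u = ∑ i, σ (γ u i) * lam i)
    (G P X Y : ℝ) (hG1 : 1 ≤ G) (hY : 0 ≤ Y) (hG : ∀ u i, house (γ u i : K) ≤ G)
    (hE : ∀ u, house (e u : K) ≤ Real.exp Y) (hW : ∀ u, ‖w u‖ ≤ Y)
    (hP : ∀ u, house (p u : K) ≤ P) (T T₀ S S' : ℕ) (hS : S ≤ S') (hS' : 0 < S')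
    (hX : Fintype.card ι * (P * G ^ (Fintype.card κ * T)) ≤ Real.exp X)
    (hnum : Module.finrank ℚ K * (X + 4 * Y * S') < T₀ * S)
    (h : ∀ l < S, ∀ τ : κ → ℕ, (∀ i, τ i < T + T₀) → val γ e p τ l = 0) :
    ∀ l < S', ∀ τ : κ → ℕ, (∀ i, τ i < T) → val γ e p τ l = 0 := by
  intro l hl τ hτ
  by_contra hne
  have hsch := schwarz (phi σ γ w p τ) (phi_diff σ γ w p τ) S S' T₀ hS hS' (by
    intro j hj i hi
    rw [phi_iter]
    exact vanish σ γ e w lam p he hw (T + T₀) j (h j hj) i τ (fun a => by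
      have := hτ a; omega)) (Real.exp (X + 4 * Y * S')) (by
    intro z hz
    calc ‖phi σ γ w p τ z‖ ≤ ∑ u : ι, ‖(σ (p u) * ∏ i, σ (γ u i) ^ τ i) * Complex.exp (w u * z)‖ :=
          norm_sum_le _ _
      _ ≤ ∑ u : ι, (P * G ^ (Fintype.card κ * T)) * Real.exp (4 * Y * S') := by
        apply Finset.sum_le_sum
        intro u _
        rw [norm_mul, norm_mul]
        have hP0 : 0 ≤ P := (house_nonneg _).trans (hP u)
        gcongr
        · exact (norm_embedding_le_house _ _).trans (hP u)
        · rw [norm_prod]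
          calc _ ≤ ∏ i : κ, G ^ T := by
                apply Finset.prod_le_prod
                · intros; positivity
                · intro i _
                  rw [norm_pow]
                  calc _ ≤ G ^ (τ i) := by
                        gcongr
                        exact (norm_embedding_le_house _ _).trans (hG u i)
                    _ ≤ _ := pow_le_pow_right₀ hG1 (hτ i).le
            _ = _ := by simp [mul_comm _ T, pow_mul]
        · refine (Complex.norm_exp_le_exp_norm _).trans ?_
          gcongr
          rw [norm_mul]
          calc _ ≤ Y * (4 * S') := by gcongr; exact hW u
            _ = _ := by ring
      _ = (Fintype.card ι * (P * G ^ (Fintype.card κ * T))) * Real.exp (4 * Y * S') := by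
        simp; ring
      _ ≤ Real.exp X * Real.exp (4 * Y * S') := by gcongr
      _ = _ := (Real.exp_add _ _).symm) l hl
  rw [phi_nat σ γ e w p he] at hsch
  have hhouse : house (val γ e p τ l : K) ≤ Real.exp (X + 4 * Y * S') := by
    simp only [val, map_sum, map_mul]
    refine (house_sum_le_sum_house _ _).trans ?_
    calc _ ≤ ∑ u : ι, (G ^ (Fintype.card κ * T) * Real.exp Y ^ S') * P := by
          apply Finset.sum_le_sum
          intro u _
          refine (house_mul_le _ _).trans ?_
          have hP0 : 0 ≤ P := (house_nonneg _).trans (hP u)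
          have := house_coef γ e G (Real.exp Y) hG1 (Real.one_le_exp hY) hG hE T S' τ
            (fun i => (hτ i).le) l hl.le u
          gcongr
          · exact house_nonneg _
          · exact hP u
      _ = (Fintype.card ι * (P * G ^ (Fintype.card κ * T))) * Real.exp (Y * S') := by
        rw [← Real.exp_nat_mul]; simp; ring_nf
      _ ≤ Real.exp X * Real.exp (4 * Y * S') := by
        gcongr
        linarith
      _ = _ := (Real.exp_add _ _).symm
  have hli := liouville σ _ hne _ hhouse
  set Z := X + 4 * Y * S'
  have hD : 0 < Module.finrank ℚ K := Module.finrank_pos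
  have : ‖σ (val γ e p τ l)‖ * Real.exp Z ^ (Module.finrank ℚ K - 1)
      ≤ Real.exp (Module.finrank ℚ K * Z - T₀ * S) := by
    calc _ ≤ Real.exp Z * Real.exp (-(T₀ * S)) * Real.exp Z ^ (Module.finrank ℚ K - 1) := by
          gcongr
      _ = Real.exp (Module.finrank ℚ K * Z - T₀ * S) := by
        rw [← Real.exp_nat_mul, ← Real.exp_add, ← Real.exp_add, Nat.cast_sub hD]
        congr 1; push_cast; ring
  have h3 : Real.exp (Module.finrank ℚ K * Z - T₀ * S) < 1 := by
    rw [Real.exp_lt_one_iff]; linarith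
  linarith

end extrap

lemma vander {ι : Type} [DecidableEq ι] (s : Finset ι) (c x : ι → ℂ) (N : ℕ)
    (hN : (s.image x).card ≤ N) (h : ∀ l < N, ∑ u ∈ s, c u * x u ^ l = 0) (v : ℂ) :
    ∑ u ∈ s with x u = v, c u = 0 := by
  by_cases hv : v ∈ s.image x
  swap
  · rw [Finset.filter_false_of_mem]
    · simp
    · intro u hu hh
      exact hv (hh ▸ Finset.mem_image_of_mem x hu)
  let P : Polynomial ℂ := ∏ y ∈ (s.image x).erase v, (Polynomial.X - Polynomial.C y)
  have hdeg : P.natDegree < N := by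
    have : P.natDegree = ((s.image x).erase v).card := by
      simp only [P]
      rw [Polynomial.natDegree_prod_of_monic _ _ (fun y _ => Polynomial.monic_X_sub_C y)]
      simp
    rw [this, Finset.card_erase_of_mem hv]
    have : 0 < (s.image x).card := Finset.card_pos.2 ⟨v, hv⟩
    omega
  have h1 : ∑ u ∈ s, c u * P.eval (x u) = 0 := by
    simp only [Polynomial.eval_eq_sum_range' hdeg, Finset.mul_sum]
    rw [Finset.sum_comm]
    refine Finset.sum_eq_zero fun l hl => ?_
    have := h l (Finset.mem_range.1 hl)
    calc _ = P.coeff l * ∑ u ∈ s, c u * x u ^ l := by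
          rw [Finset.mul_sum]; refine Finset.sum_congr rfl fun u _ => by ring
      _ = 0 := by rw [this, mul_zero]
  have h2 : ∑ u ∈ s, c u * P.eval (x u) = (∑ u ∈ s with x u = v, c u) * P.eval v := by
    rw [Finset.sum_mul, Finset.sum_filter]
    refine Finset.sum_congr rfl fun u hu => ?_
    split_ifs with hx
    · rw [hx]
    · have : P.eval (x u) = 0 := by
        simp only [P, Polynomial.eval_prod]
        apply Finset.prod_eq_zero (i := x u)
        · simp [hx]; exact ⟨u, hu, rfl⟩
        · simp
      rw [this, mul_zero]
  have h3 : P.eval v ≠ 0 := by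
    simp only [P, Polynomial.eval_prod]
    rw [Finset.prod_ne_zero_iff]
    intro y hy
    simp [sub_ne_zero]
    exact (Finset.ne_of_mem_erase hy).symm
  rw [h1] at h2
  exact (mul_eq_zero.1 h2.symm).resolve_right h3

lemma endgame {ι : Type} [Fintype ι] (c w : ι → ℂ) (hinj : Function.Injective w) (W : ℕ)
    (hW : ∀ u, ‖w u‖ ≤ W) (T S : ℕ) (hT : 2 * W + 1 ≤ T) (hS : Fintype.card ι ≤ S)
    (h : ∀ l < S, ∀ k < T, ∑ u, c u * w u ^ k * Complex.exp (w u * l) = 0) : c = 0 := by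
  classical
  ext u₀
  let s : Finset ι := {u | Complex.exp (w u) = Complex.exp (w u₀)}
  have h1 : ∀ k < T, ∑ u ∈ s, c u * w u ^ k = 0 := by
    intro k hk
    have := vander Finset.univ (fun u => c u * w u ^ k) (fun u => Complex.exp (w u)) S
      (Finset.card_image_le.trans hS) (fun l hl => by
        rw [← h l hl k hk]
        refine Finset.sum_congr rfl fun u _ => ?_
        rw [mul_comm (w u) l, Complex.exp_nat_mul]) (Complex.exp (w u₀))
    exact this
  have hex : ∀ u, Complex.exp (w u) = Complex.exp (w u₀) →
      ∃ k : ℤ, w u = w u₀ + k * (2 * Real.pi * Complex.I) := fun u hu =>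
    Complex.exp_eq_exp_iff_exists_int.1 hu
  have hcard : s.card ≤ T := by
    let f : ι → ℤ := fun u => if hu : Complex.exp (w u) = Complex.exp (w u₀) then (hex u hu).choose else 0
    have hf : ∀ u ∈ s, w u = w u₀ + f u * (2 * Real.pi * Complex.I) := by
      intro u hu
      have hu' : Complex.exp (w u) = Complex.exp (w u₀) := by simpa [s] using hu
      simp only [f, dif_pos hu']
      exact (hex u hu').choose_spec
    have : s.card ≤ (Finset.Icc (-(W:ℤ)) W).card := by
      apply Finset.card_le_card_of_injOn f
      · intro u hu
        have h2 := hf u hu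
        have h3 : ‖(f u : ℂ) * (2 * Real.pi * Complex.I)‖ ≤ 2 * W := by
          have : (f u : ℂ) * (2 * Real.pi * Complex.I) = w u - w u₀ := by rw [h2]; ring
          rw [this]
          refine (norm_sub_le _ _).trans ?_
          have := hW u; have := hW u₀; linarith
        have h4 : |(f u : ℝ)| * (2 * Real.pi) ≤ 2 * W := by
          simpa [abs_of_pos Real.pi_pos] using h3
        have h5 : |(f u : ℝ)| ≤ W := by
          nlinarith [Real.pi_gt_three, abs_nonneg (f u : ℝ)]
        have h6 : |f u| ≤ W := by exact_mod_cast h5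
        rw [abs_le] at h6
        simpa using h6
      · intro u hu u' hu' hff
        apply hinj
        rw [hf u hu, hf u' hu', hff]
    simp at this
    omega
  have h2 := vander s c w T (Finset.card_image_le.trans hcard) h1 (w u₀)
  have h3 : (s.filter fun u => w u = w u₀) = {u₀} := by
    ext u
    simp only [s, Finset.mem_filter, Finset.mem_univ, true_and, Finset.mem_singleton]
    constructor
    · rintro ⟨-, h⟩; exact hinj h
    · rintro rfl; simp
  rw [h3] at h2
  simpa using h2
end ErdosBaker

namespace ErdosBaker
open NumberField

lemma exists_g (a b : ℝ) (N : ℕ) : ∃ g : ℕ, N ≤ g ∧ 1 ≤ g ∧ a * (1 + Real.log g) + b < g := by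
  have h1 : (fun x : ℝ => a * (1 + Real.log x) + b) =o[atTop] (fun x => x) := by
    have hc : ∀ c : ℝ, (fun _ : ℝ => c) =o[atTop] (fun x : ℝ => x) := fun c =>
      Asymptotics.isLittleO_const_left.2 (Or.inr tendsto_norm_atTop_atTop)
    exact (((hc 1).add Real.isLittleO_log_id_atTop).const_mul_left a).add (hc b)
  have h2 := h1.def (show (0:ℝ) < 1/2 by norm_num)
  have h3 := tendsto_natCast_atTop_atTop.eventually h2
  obtain ⟨g, hg, hg1⟩ := (h3.and (eventually_ge_atTop (max N 1))).exists
  refine ⟨g, (le_max_left _ _).trans hg1, (le_max_right _ _).trans hg1, ?_⟩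
  have hpos : (0:ℝ) < g := by exact_mod_cast (le_max_right _ _).trans hg1
  have h4 := (le_abs_self _).trans hg
  simp only [Real.norm_eq_abs, abs_of_pos hpos] at h4
  linarith

theorem baker_abstract {K : Type} [Field K] [NumberField K] (σ : K →+* ℂ) {κ : Type} [Fintype κ]
    (lam : κ → ℂ) (c₀ : ℕ) (hc₀ : 1 ≤ c₀)
    (H : ∀ U : ℕ, 1 ≤ U → ∃ (ι : Type) (_ : Fintype ι) (γ : ι → κ → 𝓞 K) (e : ι → 𝓞 K) (w : ι → ℂ),
      Fintype.card ι = U ^ (Fintype.card κ + 1) ∧ Function.Injective w ∧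
      (∀ u, Complex.exp (w u) = σ (e u)) ∧ (∀ u, w u = ∑ i, σ (γ u i) * lam i) ∧
      (∀ u i, house (γ u i : K) ≤ c₀ * U) ∧ (∀ u, house (e u : K) ≤ Real.exp (c₀ * U)) ∧
      (∀ u, ‖w u‖ ≤ c₀ * U)) : False := by
  classical
  obtain ⟨C, hC1, hsieg⟩ := siegel K
  set m := Fintype.card κ with hm
  set n := m + 1 with hn
  set K0 := 2 * n ^ 2 with hK0
  set D := Module.finrank ℚ K with hD
  set c' : ℝ := 2 * Real.log C + 4 * n ^ 2 + 2 * m * (K0 + 1) * (Real.log c₀ + 2 * n) + c₀ with hc'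
  obtain ⟨g, hgN, hg1, hg⟩ := exists_g (D * c') (D * (4 * c₀)) (max (2 * (K0 + 1) ^ m) (2 * c₀ + 1))
  have hgN1 : 2 * (K0 + 1) ^ m ≤ g := (le_max_left _ _).trans hgN
  have hgN2 : 2 * c₀ + 1 ≤ g := (le_max_right _ _).trans hgN
  set U := g ^ (2 * n) with hU
  have hU1 : 1 ≤ U := Nat.one_le_pow _ _ hg1
  obtain ⟨ι, _, γ, e, w, hcard, hinj, he, hw, hγ, hE, hW⟩ := H U hU1
  set T0 := g ^ (2 * n + 2) with hT0
  have hT01 : 1 ≤ T0 := Nat.one_le_pow _ _ hg1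
  set T1 := (K0 + 1) * T0 with hT1
  clear_value T1 T0 U D
  have hT11 : 1 ≤ T1 := by rw [hT1]; exact Nat.one_le_iff_ne_zero.2 (by positivity)
  have hgr : (1:ℝ) ≤ g := by exact_mod_cast hg1
  have hc₀r : (1:ℝ) ≤ c₀ := by exact_mod_cast hc₀
  have hUr : (1:ℝ) ≤ U := by exact_mod_cast hU1
  set G : ℝ := c₀ * U with hG
  have hG1 : 1 ≤ G := one_le_mul_of_one_le_of_one_le hc₀r hUr
  set A : ℝ := G ^ (m * T1) * Real.exp G ^ g with hA
  have hA1 : 1 ≤ A := one_le_mul_of_one_le_of_one_le (one_le_pow₀ hG1)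
    (one_le_pow₀ (Real.one_le_exp (by linarith)))
  have hne : Nonempty ι := by
    rw [← Fintype.card_pos_iff, hcard]; positivity
  obtain ⟨p, hp0, hpz, hpb⟩ := hsieg ((κ → Fin T1) × Fin g) ι
    (fun x u => coef γ e (fun i => (x.1 i : ℕ)) x.2 u) A (by
      intro h0
      obtain ⟨u⟩ := hne
      have := congrFun (congrFun h0 (fun _ => ⟨0, hT11⟩, ⟨0, hg1⟩)) u
      simp [coef] at this) (by
      simp only [Fintype.card_prod, Fintype.card_pi, Fintype.card_fin]
      have : 0 < T1 := hT11
      positivity) (by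
      simp only [Fintype.card_prod, Fintype.card_pi, Fintype.card_fin, Finset.prod_const,
        Finset.card_univ, ← hm]
      rw [hcard, hT1, hU, hT0]
      calc 2 * (((K0 + 1) * g ^ (2 * n + 2)) ^ m * g)
          = (2 * (K0 + 1) ^ m) * (g ^ ((2 * n + 2) * m) * g) := by rw [mul_pow, ← pow_mul]; ring
        _ ≤ g * (g ^ ((2 * n + 2) * m) * g) := by gcongr
        _ = (g ^ (2 * n)) ^ (m + 1) := by
          rw [← pow_mul, ← pow_succ, ← pow_succ']; congr 1; rw [hn]; ring) hA1 (by
      intro x u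
      exact house_coef γ e G (Real.exp G) hG1 (Real.one_le_exp (by linarith)) hγ hE T1 g _
        (fun i => (x.1 i).2.le) _ x.2.2.le u)
  set P : ℝ := C * (C * Fintype.card ι * A) with hP
  set X : ℝ := 2 * Real.log C + 2 * n * Real.log U + 2 * (m * T1) * Real.log G + G * g with hX
  have hlogg : 0 ≤ Real.log g := Real.log_nonneg hgr
  have hXb : Fintype.card ι * (P * G ^ (m * T1)) ≤ Real.exp X := by
    have e1 : Real.exp X = C ^ 2 * (U:ℝ) ^ (2 * n) * G ^ (2 * (m * T1)) * Real.exp (G * g) := by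
      rw [hX, Real.exp_add, Real.exp_add, Real.exp_add]
      have a1 : Real.exp (2 * Real.log C) = C ^ 2 := by
        rw [show 2 * Real.log C = ((2:ℕ):ℝ) * Real.log C by norm_num, Real.exp_nat_mul, Real.exp_log (by linarith)]
      have a2 : Real.exp (2 * n * Real.log U) = (U:ℝ) ^ (2 * n) := by
        rw [show 2 * (n:ℝ) * Real.log U = ((2 * n:ℕ):ℝ) * Real.log U by push_cast; ring, Real.exp_nat_mul, Real.exp_log (by linarith)]
      have a3 : Real.exp (2 * (m * T1) * Real.log G) = G ^ (2 * (m * T1)) := by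
        rw [show 2 * ((m:ℝ) * T1) * Real.log G = ((2 * (m * T1):ℕ):ℝ) * Real.log G by push_cast; ring, Real.exp_nat_mul, Real.exp_log (by linarith)]
      rw [a1, a2, a3]
    rw [e1, hP, hA, hcard, ← Real.exp_nat_mul]
    apply le_of_eq
    push_cast
    rw [mul_comm (g:ℝ) G]
    ring
  have hlogU : Real.log U = 2 * n * Real.log g := by
    rw [hU]; push_cast; rw [Real.log_pow]; push_cast; ring
  have hlogG : Real.log G = Real.log c₀ + 2 * n * Real.log g := by
    rw [hG, Real.log_mul (by positivity) (by positivity), hlogU]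
  have hlogC : 0 ≤ Real.log C := Real.log_nonneg hC1
  have hlogc : 0 ≤ Real.log c₀ := Real.log_nonneg hc₀r
  have hT0r : (1:ℝ) ≤ T0 := by exact_mod_cast hT01
  have hXc : X ≤ c' * (1 + Real.log g) * T0 := by
    set ℓ := Real.log g
    have hΛ : 1 ≤ (1 + ℓ) * T0 := one_le_mul_of_one_le_of_one_le (by linarith) hT0r
    have b1 : 2 * Real.log C ≤ 2 * Real.log C * ((1 + ℓ) * T0) :=
      le_mul_of_one_le_right (by linarith) hΛ
    have b2 : 2 * n * Real.log U ≤ 4 * n ^ 2 * ((1 + ℓ) * T0) := by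
      rw [hlogU]
      calc 2 * (n:ℝ) * (2 * n * ℓ) = 4 * n ^ 2 * (ℓ * 1) := by ring
        _ ≤ _ := by gcongr; linarith
    have b3 : 2 * (m * T1) * Real.log G ≤ 2 * m * (K0 + 1) * (Real.log c₀ + 2 * n) * ((1 + ℓ) * T0) := by
      rw [hlogG, hT1]; push_cast
      calc 2 * ((m:ℝ) * ((K0 + 1) * T0)) * (Real.log c₀ + 2 * n * ℓ)
          ≤ 2 * ((m:ℝ) * ((K0 + 1) * T0)) * ((Real.log c₀ + 2 * n) * (1 + ℓ)) := by
            gcongr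
            have : 0 ≤ Real.log c₀ * ℓ := by positivity
            have : (0:ℝ) ≤ 2 * n := by positivity
            linarith
        _ = _ := by ring
    have b4 : G * g ≤ c₀ * ((1 + ℓ) * T0) := by
      rw [hG, mul_assoc]
      refine mul_le_mul_of_nonneg_left ?_ (by linarith)
      have : (U:ℝ) * g ≤ T0 := by
        rw [hU, hT0]; push_cast
        rw [← pow_succ]
        exact pow_le_pow_right₀ hgr (by omega)
      nlinarith
    rw [hX, hc']
    linarith
  have hD0 : (0:ℝ) ≤ D := by positivity
  have main : ∀ k ≤ K0, ∀ l < g ^ (k + 1), ∀ τ : κ → ℕ, (∀ i, τ i < (K0 + 1 - k) * T0) →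
      val γ e p τ l = 0 := by
    intro k
    induction k with
    | zero =>
      intro _ l hl τ hτ
      exact hpz (fun i => ⟨τ i, by rw [hT1]; simpa using hτ i⟩, ⟨l, by simpa using hl⟩)
    | succ k ih =>
      intro hk
      have hTle : (K0 + 1 - (k + 1)) * T0 ≤ T1 := by
        rw [hT1]; gcongr; omega
      refine extrapolate σ γ e w lam p he hw G P X G hG1 (by linarith) hγ hE hW hpb
        ((K0 + 1 - (k + 1)) * T0) T0 (g ^ (k + 1)) (g ^ (k + 1 + 1))
        (Nat.pow_le_pow_right hg1 (by omega)) (by positivity) ?_ ?_ ?_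
      · refine le_trans ?_ hXb
        have hP0 : 0 ≤ P := by positivity
        gcongr
      · rw [← hD]; push_cast
        have c1 : G * (g:ℝ) ^ (k + 1 + 1) = c₀ * (T0 * g ^ k) := by
          rw [hG, hU, hT0]; push_cast; ring
        have hgk : (1:ℝ) ≤ (g:ℝ) ^ k := one_le_pow₀ hgr
        have c2 : X ≤ c' * (1 + Real.log g) * (T0 * g ^ k) := by
          refine hXc.trans ?_
          have : 0 ≤ c' := by positivity
          gcongr
          exact le_mul_of_one_le_right (by linarith) hgk
        calc (D:ℝ) * (X + 4 * G * g ^ (k + 1 + 1)) = D * (X + 4 * (G * g ^ (k + 1 + 1))) := by ring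
          _ ≤ D * (c' * (1 + Real.log g) * (T0 * g ^ k) + 4 * (c₀ * (T0 * g ^ k))) := by
            rw [c1]; gcongr
          _ = (D * c' * (1 + Real.log g) + D * (4 * c₀)) * (T0 * g ^ k) := by ring
          _ < g * (T0 * g ^ k) := by gcongr
          _ = _ := by ring
      · have : (K0 + 1 - (k + 1)) * T0 + T0 = (K0 + 1 - k) * T0 := by
          rw [show K0 + 1 - k = (K0 + 1 - (k + 1)) + 1 by omega]; ring
        rw [this]
        exact ih (by omega)
  have hfin := main K0 le_rfl
  have hWT : 2 * (c₀ * U) + 1 ≤ T0 := by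
    rw [hT0, hU]
    have h6 := Nat.one_le_pow (2 * n) g hg1
    calc 2 * (c₀ * g ^ (2 * n)) + 1 ≤ 2 * (c₀ * g ^ (2 * n)) + g ^ (2 * n) := by omega
      _ = (2 * c₀ + 1) * g ^ (2 * n) := by ring
      _ ≤ g * g ^ (2 * n) := Nat.mul_le_mul_right _ hgN2
      _ = g ^ (2 * n + 1) := (pow_succ' _ _).symm
      _ ≤ _ := Nat.pow_le_pow_right hg1 (by omega)
  have hzero := endgame (fun u => σ (p u)) w hinj (c₀ * U) (by
    intro u; push_cast; exact hW u) T0 (g ^ (K0 + 1)) hWT (by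
      rw [hcard, hU, ← pow_mul]
      have h5 : 2 * n * n ≤ K0 + 1 := by rw [hK0]; nlinarith
      exact Nat.pow_le_pow_right hg1 h5) (by
      intro l hl k hk
      have := vanish σ γ e w lam p he hw T0 l (fun τ hτ => hfin l hl τ (by simpa using hτ)) k 0
        (by simpa using fun _ => hk)
      simpa using this)
  apply hp0
  ext u
  have := congrFun hzero u
  simpa using this
end ErdosBaker

namespace ErdosBaker
open NumberField

theorem baker_core {K : Type} [Field K] [NumberField K] (σ : K →+* ℂ) {κ : Type} [Fintype κ]
    (α : κ → 𝓞 K) (α₀ : 𝓞 K) (β : κ → 𝓞 K) (lam : κ → ℂ) (lam₀ : ℂ)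
    (hexp : ∀ i, Complex.exp (lam i) = σ (α i)) (hexp₀ : Complex.exp lam₀ = σ α₀)
    (hrel : lam₀ = ∑ i, σ (β i) * lam i)
    (hind : ∀ (k₀ : ℤ) (k : κ → ℤ), k₀ * lam₀ + ∑ i, k i * lam i = 0 → k₀ = 0 ∧ k = 0) : False := by
  classical
  set B : ℝ := 1 + ∑ i, house (β i : K) + (house (α₀ : K) + ∑ i, house (α i : K)) +
    (‖lam₀‖ + ∑ i, ‖lam i‖) with hB
  have n1 : 0 ≤ ∑ i, house (β i : K) := Finset.sum_nonneg fun i _ => house_nonneg _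
  have n2 : 0 ≤ ∑ i, house (α i : K) := Finset.sum_nonneg fun i _ => house_nonneg _
  have n3 : 0 ≤ ∑ i, ‖lam i‖ := Finset.sum_nonneg fun i _ => norm_nonneg _
  have n4 : 0 ≤ house (α₀ : K) := house_nonneg _
  have n5 : 0 ≤ ‖lam₀‖ := norm_nonneg _
  have hBc : B ≤ ⌈B⌉₊ := Nat.le_ceil B
  refine baker_abstract σ lam ⌈B⌉₊ (by
    have : (1:ℝ) ≤ ⌈B⌉₊ := by linarith
    exact_mod_cast this) ?_
  intro U hU
  refine ⟨Fin U × (κ → Fin U), inferInstance, fun u i => ((u.2 i : ℕ) : 𝓞 K) + ((u.1 : ℕ) : 𝓞 K) * β i,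
    fun u => α₀ ^ (u.1 : ℕ) * ∏ i, α i ^ (u.2 i : ℕ),
    fun u => (u.1 : ℕ) * lam₀ + ∑ i, (u.2 i : ℕ) * lam i, ?_, ?_, ?_, ?_, ?_, ?_, ?_⟩
  · simp [pow_succ']
  · intro u v huv
    have := hind ((u.1 : ℕ) - (v.1 : ℕ)) (fun i => (u.2 i : ℕ) - (v.2 i : ℕ)) (by
      have h2 : (u.1 : ℕ) * lam₀ + ∑ i, (u.2 i : ℕ) * lam i - ((v.1 : ℕ) * lam₀ + ∑ i, (v.2 i : ℕ) * lam i) = 0 :=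
        sub_eq_zero.2 huv
      push_cast
      simp only [sub_mul, Finset.sum_sub_distrib]
      rw [← h2]; ring)
    ext
    · have := this.1; omega
    · rename_i i
      have := congrFun this.2 i
      simp at this; omega
  · intro u
    simp only [Complex.exp_add, Complex.exp_sum, Complex.exp_nat_mul, hexp, hexp₀]
    simp
  · intro u
    simp only [map_add, map_mul, map_natCast, add_mul, Finset.sum_add_distrib]
    rw [hrel, add_comm, Finset.mul_sum]
    simp only [mul_assoc]
  · intro u i
    simp only [map_add, map_mul, map_natCast]
    refine (house_add_le _ _).trans ?_
    have h1 : house (((u.2 i : ℕ) : K)) = (u.2 i : ℕ) := by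
      have := house_intCast (K := K) (u.2 i : ℕ)
      simpa using this
    rw [h1, house_nat_mul]
    have h2 : ((u.2 i : ℕ) : ℝ) ≤ U := by exact_mod_cast (u.2 i).2.le
    have h3 : ((u.1 : ℕ) : ℝ) ≤ U := by exact_mod_cast u.1.2.le
    have h4 : house (β i : K) ≤ ∑ i, house (β i : K) :=
      Finset.single_le_sum (f := fun i => house (β i : K)) (fun i _ => house_nonneg _) (Finset.mem_univ i)
    calc ((u.2 i : ℕ) : ℝ) + (u.1 : ℕ) * house (β i : K) ≤ U + U * house (β i : K) := by
          gcongr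
          exact house_nonneg _
      _ = (1 + house (β i : K)) * U := by ring
      _ ≤ _ := by gcongr; linarith
  · intro u
    simp only [map_mul, map_prod, map_pow]
    have hh : ∀ x : K, ∀ j : ℕ, j ≤ U → house (x ^ j) ≤ Real.exp (U * house x) := by
      intro x j hj
      refine (house_pow_le _ _).trans ?_
      have h0 := house_nonneg x
      calc house x ^ j ≤ Real.exp (house x) ^ j := by
            gcongr
            linarith [Real.add_one_le_exp (house x)]
        _ = Real.exp (j * house x) := (Real.exp_nat_mul _ _).symm
        _ ≤ _ := by gcongr
    refine (house_mul_le _ _).trans ?_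
    calc _ ≤ Real.exp (U * house (α₀ : K)) * ∏ i, Real.exp (U * house (α i : K)) := by
          gcongr
          · exact house_nonneg _
          · exact hh _ _ u.1.2.le
          · refine (house_prod_le' _ _).trans ?_
            apply Finset.prod_le_prod
            · intros; exact house_nonneg _
            · intro i _; exact hh _ _ (u.2 i).2.le
      _ = Real.exp ((house (α₀ : K) + ∑ i, house (α i : K)) * U) := by
        rw [← Real.exp_sum, ← Real.exp_add, ← Finset.mul_sum]; ring_nf
      _ ≤ _ := by
        gcongr; linarith
  · intro u
    calc _ ≤ U * ‖lam₀‖ + ∑ i, U * ‖lam i‖ := by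
          refine (norm_add_le _ _).trans ?_
          refine add_le_add ?_ ((norm_sum_le _ _).trans (Finset.sum_le_sum fun i _ => ?_))
          · rw [norm_mul, Complex.norm_natCast]
            gcongr
            exact u.1.2.le
          · rw [norm_mul, Complex.norm_natCast]
            gcongr
            exact (u.2 i).2.le
      _ = (‖lam₀‖ + ∑ i, ‖lam i‖) * U := by rw [← Finset.mul_sum]; ring
      _ ≤ _ := by gcongr; linarith

theorem baker_lin {K : Type} [Field K] [NumberField K] (σ : K →+* ℂ) {ι : Type} [Fintype ι]
    (α : ι → 𝓞 K) (ℓ : ι → ℂ) (hexp : ∀ i, Complex.exp (ℓ i) = σ (α i))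
    (hli : LinearIndependent ℚ ℓ) (c : ι → K) (h : ∑ i, σ (c i) * ℓ i = 0) : c = 0 := by
  classical
  by_contra hc
  obtain ⟨i₀, hi₀⟩ := Function.ne_iff.1 hc
  have hi₀ : c i₀ ≠ 0 := hi₀
  -- pass to an integer multiple
  have hex : ∃ M : ℕ, M ≠ 0 ∧ ∀ i, ∃ b : 𝓞 K, (b : K) = M * (- c i / c i₀) := by
    have : ∀ i, ∃ M : ℕ, M ≠ 0 ∧ IsIntegral ℤ ((M : K) * (- c i / c i₀)) := by
      intro i
      obtain ⟨y, hy, hy2⟩ := ((IsFractionRing.isAlgebraic_iff ℤ ℚ K).2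
        (Algebra.IsAlgebraic.isAlgebraic (R := ℚ) (- c i / c i₀))).exists_integral_multiple
      refine ⟨y.natAbs, by simpa using hy, ?_⟩
      rcases Int.natAbs_eq y with h | h
      · have h3 : ((y.natAbs : ℕ) : K) = (y : K) := by
          conv_rhs => rw [h]
          simp
        rw [h3]; simpa [zsmul_eq_mul] using hy2
      · have h3 : ((y.natAbs : ℕ) : K) = -(y : K) := by
          conv_rhs => rw [h]
          simp
        rw [h3, neg_mul]; simpa [zsmul_eq_mul] using hy2.neg
    choose M hM0 hM using this
    refine ⟨∏ i, M i, Finset.prod_ne_zero_iff.2 fun i _ => hM0 i, fun i => ?_⟩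
    refine ⟨⟨((∏ j, M j : ℕ) : K) * (- c i / c i₀), ?_⟩, rfl⟩
    rw [← Finset.mul_prod_erase _ _ (Finset.mem_univ i), mul_comm (M i)]
    push_cast
    rw [mul_assoc]
    refine IsIntegral.mul (IsIntegral.prod _ fun j _ => ?_) (hM i)
    exact_mod_cast isIntegral_algebraMap (R := ℤ) (A := K) (x := (M j : ℤ))
  obtain ⟨M, hM0, hM⟩ := hex
  choose b hb using hM
  have hMC : (M : ℂ) ≠ 0 := by exact_mod_cast hM0
  refine baker_core σ (κ := {i // i ≠ i₀}) (fun i => α i) (α i₀ ^ M) (fun i => b i) (fun i => ℓ i)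
    (M * ℓ i₀) (fun i => hexp i) (by rw [Complex.exp_nat_mul, hexp]; simp) ?_ ?_
  · have h1 : ∑ i : {i // i ≠ i₀}, σ (b i) * ℓ i = ∑ i ∈ univ.erase i₀, σ (b i) * ℓ i := by
      rw [← Finset.sum_subtype (univ.erase i₀) (by simp) (fun i => σ (b i) * ℓ i)]
    rw [h1]
    rw [← Finset.add_sum_erase _ _ (Finset.mem_univ i₀)] at h
    have hs : σ (c i₀) ≠ 0 := by simpa using hi₀
    have h2 : ∑ i ∈ univ.erase i₀, σ (b i) * ℓ i = (- M / σ (c i₀)) * ∑ i ∈ univ.erase i₀, σ (c i) * ℓ i := by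
      rw [Finset.mul_sum]
      refine Finset.sum_congr rfl fun i _ => ?_
      rw [hb]; simp; ring
    rw [h2, eq_neg_of_add_eq_zero_right h]
    field_simp
  · intro k₀ k hk
    have hq := Fintype.linearIndependent_iff.1 hli
      (fun i => if hi : i = i₀ then (k₀ * M : ℚ) else (k ⟨i, hi⟩ : ℚ)) (by
        rw [← Finset.add_sum_erase _ _ (Finset.mem_univ i₀), ← hk,
          Finset.sum_subtype (univ.erase i₀) (p := fun i => i ≠ i₀) (by simp)]
        congr 1
        · simp [Algebra.smul_def]; ring
        · refine Finset.sum_congr rfl fun i _ => ?_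
          simp [i.2, Algebra.smul_def])
    constructor
    · have := hq i₀
      simpa [hM0] using this
    · ext i
      have := hq i
      simpa [i.2] using this

theorem baker_gal {K : Type} [Field K] [NumberField K] (σ : K →+* ℂ) (θ : K →+* K) {ι : Type}
    (α : ι → 𝓞 K) (ℓ : ι → ℂ) (hexp : ∀ i, Complex.exp (ℓ i) = σ (α i)) (s : Finset ι)
    (c : ι → K) (h : ∑ i ∈ s, σ (c i) * ℓ i = 0) : ∑ i ∈ s, σ (θ (c i)) * ℓ i = 0 := by
  classical
  induction hn : s.card generalizing s c with
  | zero =>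
    rw [Finset.card_eq_zero] at hn; simp [hn]
  | succ n ih =>
    by_cases hli : LinearIndependent ℚ (fun i : s => ℓ i)
    · have h0 := baker_lin σ (ι := s) (fun i => α i) (fun i => ℓ i) (fun i => hexp i) hli
        (fun i => c i) (by rw [← h, ← Finset.sum_coe_sort s (fun i => σ (c i) * ℓ i)])
      refine Finset.sum_eq_zero fun i hi => ?_
      have := congrFun h0 ⟨i, hi⟩
      simp at this
      simp [this]
    · obtain ⟨g, hg, ⟨i₀, hs⟩, hi₀⟩ := Fintype.not_linearIndependent_iff.1 hli
      set r : ι → ℚ := fun i => if hi : i ∈ s then - g ⟨i, hi⟩ / g ⟨i₀, hs⟩ else 0 with hr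
      have hrel : ℓ i₀ = ∑ i ∈ s.erase i₀, (r i : ℂ) * ℓ i := by
        have h1 : ∑ i ∈ s, (r i : ℂ) * ℓ i = 0 := by
          rw [← Finset.sum_coe_sort s (fun i => (r i : ℂ) * ℓ i)]
          have : ∀ i : s, (r i : ℂ) * ℓ i = (- 1 / (g ⟨i₀, hs⟩ : ℂ)) * (g i • ℓ i) := by
            intro i
            simp only [hr, i.2, dif_pos, Algebra.smul_def]
            simp; ring
          simp only [this]
          rw [← Finset.mul_sum, hg, mul_zero]
        rw [← Finset.add_sum_erase _ _ hs] at h1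
        have h2 : (r i₀ : ℂ) = -1 := by
          have : r i₀ = -1 := by
            simp only [hr, hs, dif_pos]; field_simp
          rw [this]; simp
        rw [h2] at h1
        linear_combination -h1
      have hred : ∀ θ' : K →+* ℂ, ∑ i ∈ s, θ' (c i) * ℓ i
          = ∑ i ∈ s.erase i₀, θ' (c i + (r i : K) * c i₀) * ℓ i := by
        intro θ'
        rw [← Finset.add_sum_erase _ _ hs]
        conv_lhs => rw [hrel]
        rw [Finset.mul_sum, ← Finset.sum_add_distrib]
        refine Finset.sum_congr rfl fun i _ => ?_
        simp; ring
      have h3 := ih (s.erase i₀) (fun i => c i + (r i : K) * c i₀) (by rw [← hred σ, h])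
        (by rw [Finset.card_erase_of_mem hs, hn]; rfl)
      have h4 := hred (σ.comp θ)
      simp only [RingHom.comp_apply] at h4
      rw [h4, h3]
end ErdosBaker

namespace ErdosBaker

section Lval
variable {q : ℕ} [NeZero q]

/-- term of the Dirichlet series -/
noncomputable def tm (Φ : ZMod q → ℂ) (s : ℝ) (n : ℕ) : ℂ :=
  Φ ((n + 1 : ℕ) : ZMod q) * (((n + 1 : ℝ) ^ (-s) : ℝ) : ℂ)

theorem sum_range_mul_aux (f : ℕ → ℂ) (q K : ℕ) :
    ∑ n ∈ range (q * K), f n = ∑ k ∈ range K, ∑ r ∈ range q, f (q * k + r) := by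
  induction K with
  | zero => simp
  | succ K ih => rw [Nat.mul_succ, Finset.sum_range_add, ih, Finset.sum_range_succ]

theorem sum_period (Φ : ZMod q → ℂ) : ∑ r ∈ range q, Φ ((r + 1 : ℕ) : ZMod q) = ∑ j, Φ j := by
  have h1 : ∑ r ∈ range q, Φ ((r + 1 : ℕ) : ZMod q) = ∑ j : ZMod q, Φ (j + 1) := by
    refine Finset.sum_bij (fun r _ => (r : ZMod q)) (by simp) ?_ ?_ ?_
    · intro a ha b hb hab
      simp only [Finset.mem_range] at ha hb
      have := congrArg ZMod.val hab
      rwa [ZMod.val_natCast_of_lt ha, ZMod.val_natCast_of_lt hb] at this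
    · intro b _
      exact ⟨b.val, by simpa using ZMod.val_lt b, by simp⟩
    · intro a _; simp
  rw [h1]
  exact Fintype.sum_equiv (Equiv.addRight 1) _ _ (fun _ => rfl)

theorem rpow_diff {a b s Q : ℝ} (ha : 1 ≤ a) (hab : a ≤ b) (hb : b ≤ a + Q) (hs : 1 ≤ s)
    (hs2 : s ≤ 2) : |a ^ (-s) - b ^ (-s)| ≤ 2 * Q / a ^ 2 := by
  have ha0 : 0 < a := by linarith
  have hb0 : 0 < b := by linarith
  have hQ : 0 ≤ Q := by linarith
  have h1 : b ^ (-s) ≤ a ^ (-s) := Real.rpow_le_rpow_of_nonpos ha0 hab (by linarith)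
  rw [abs_of_nonneg (by linarith)]
  have h2 : b ^ (-s) = a ^ (-s) * (a / b) ^ s := by
    rw [Real.div_rpow ha0.le hb0.le, Real.rpow_neg ha0.le, Real.rpow_neg hb0.le]
    have := (Real.rpow_pos_of_pos ha0 s).ne'
    field_simp
  have h3 : 1 + s * (a / b - 1) ≤ (a / b) ^ s := by
    have := one_add_mul_self_le_rpow_one_add (s := a / b - 1) (p := s)
      (by have : 0 ≤ a / b := by positivity
          linarith) hs
    simpa using this
  have h4 : a ^ (-s) ≤ a⁻¹ := by
    rw [← Real.rpow_neg_one]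
    exact Real.rpow_le_rpow_of_exponent_le ha (by linarith)
  have h5 : 1 - a / b ≤ Q / a := by
    rw [show 1 - a / b = (b - a) / b by field_simp]
    exact div_le_div₀ hQ (by linarith) ha0 hab
  have h6 : 0 ≤ 1 - a / b := by
    rw [show 1 - a / b = (b - a) / b by field_simp]
    apply div_nonneg <;> linarith
  calc a ^ (-s) - b ^ (-s) = a ^ (-s) * (1 - (a / b) ^ s) := by rw [h2]; ring
    _ ≤ a ^ (-s) * (s * (1 - a / b)) := by
        gcongr
        linarith
    _ ≤ a⁻¹ * (2 * (Q / a)) := by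
        gcongr
    _ = _ := by field_simp

theorem block_bound (Φ : ZMod q → ℂ) (h0 : ∑ j, Φ j = 0) {s : ℝ} (hs : 1 ≤ s) (hs2 : s ≤ 2)
    (k : ℕ) : ‖∑ r ∈ range q, tm Φ s (q * k + r)‖ ≤
      (q * (∑ j, ‖Φ j‖) * (2 * q)) * (1 / ((k : ℝ) + 1 / q) ^ 2 / q ^ 2)  := by
  have hq : 0 < q := NeZero.pos q
  have hq' : (0 : ℝ) < q := by exact_mod_cast hq
  set a : ℝ := q * k + 1
  have ha : 1 ≤ a := by simp only [a]; linarith [show (0:ℝ) ≤ q * k by positivity]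
  have e1 : ∑ r ∈ range q, tm Φ s (q * k + r) = ∑ r ∈ range q, Φ ((r + 1 : ℕ) : ZMod q) *
      ((-(a ^ (-s) - ((q * k + r : ℕ) + 1 : ℝ) ^ (-s)) : ℝ) : ℂ) := by
    have : ∑ r ∈ range q, Φ ((r + 1 : ℕ) : ZMod q) * ((a ^ (-s) : ℝ) : ℂ) = 0 := by
      rw [← Finset.sum_mul, sum_period, h0, zero_mul]
    rw [← sub_zero (∑ r ∈ range q, tm Φ s (q * k + r)), ← this, ← Finset.sum_sub_distrib]
    refine Finset.sum_congr rfl fun r _ => ?_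
    rw [tm]
    have : ((q * k + r + 1 : ℕ) : ZMod q) = ((r + 1 : ℕ) : ZMod q) := by push_cast; simp
    rw [this]; push_cast; ring
  rw [e1]
  calc _ ≤ ∑ r ∈ range q, (∑ j, ‖Φ j‖) * (2 * q / a ^ 2) := by
        refine (norm_sum_le _ _).trans (Finset.sum_le_sum fun r hr => ?_)
        rw [norm_mul]
        refine mul_le_mul ?_ ?_ (norm_nonneg _) (Finset.sum_nonneg fun _ _ => norm_nonneg _)
        · exact Finset.single_le_sum (f := fun j => ‖Φ j‖) (fun _ _ => norm_nonneg _)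
            (Finset.mem_univ _)
        · rw [Complex.norm_real, Real.norm_eq_abs, abs_neg]
          have hr' : (r : ℝ) ≤ q := by exact_mod_cast (Finset.mem_range.1 hr).le
          refine rpow_diff ha ?_ ?_ hs hs2
          · simp only [a]; push_cast; linarith [show (0:ℝ) ≤ r by positivity]
          · simp only [a]; push_cast; linarith
    _ = _ := by
        have : a = q * (k + 1 / q) := by simp only [a]; field_simp
        rw [this]
        simp
        field_simp

theorem summable_bound (C : ℝ) : Summable fun k : ℕ =>
    C * (1 / ((k : ℝ) + 1 / q) ^ 2 / (q:ℝ) ^ 2) := by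
  refine Summable.mul_left _ (Summable.div_const ?_ _)
  have := (Real.summable_one_div_nat_add_rpow (1 / q : ℝ) 2).2 (by norm_num)
  refine this.congr fun k => ?_
  rw [abs_of_nonneg (by positivity)]; norm_cast

theorem tendsto_block (Φ : ZMod q → ℂ) (h0 : ∑ j, Φ j = 0) {s : ℝ} (hs : 1 ≤ s) (hs2 : s ≤ 2) :
    Tendsto (fun K : ℕ => ∑ n ∈ range (q * K), tm Φ s n) atTop
      (𝓝 (∑' k : ℕ, ∑ r ∈ range q, tm Φ s (q * k + r))) := by
  simp only [sum_range_mul_aux]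
  refine (Summable.of_norm_bounded (summable_bound (q := q) _)
    (fun k => block_bound Φ h0 hs hs2 k)).hasSum.tendsto_sum_nat

theorem LFunction_eq_block (Φ : ZMod q → ℂ) (h0 : ∑ j, Φ j = 0) {s : ℝ} (hs : 1 < s)
    (hs2 : s ≤ 2) : ZMod.LFunction Φ s = ∑' k : ℕ, ∑ r ∈ range q, tm Φ s (q * k + r) := by
  have hs' : 1 < (s : ℂ).re := by simpa using hs
  refine tendsto_nhds_unique ?_ (tendsto_block Φ h0 hs.le hs2)
  rw [ZMod.LFunction_eq_LSeries Φ hs']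
  have h1 : HasSum (fun n => LSeries.term (Φ ·) s n) (LSeries (Φ ·) s) :=
    (ZMod.LSeriesSummable_of_one_lt_re Φ hs').hasSum
  have h2 := (hasSum_nat_add_iff' 1).2 h1
  simp only [Finset.sum_range_one, LSeries.term_zero, sub_zero] at h2
  have h3 : (fun n => LSeries.term (fun n : ℕ => Φ n) s (n + 1)) = tm Φ s := by
    ext n
    rw [LSeries.term_of_ne_zero (by omega), tm, Complex.ofReal_cpow (by positivity)]
    push_cast
    rw [Complex.cpow_neg]; rfl
  rw [h3] at h2
  exact h2.tendsto_sum_nat.comp (tendsto_id.const_mul_atTop' (NeZero.pos q))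

theorem LFunction_one_eq_block (Φ : ZMod q → ℂ) (h0 : ∑ j, Φ j = 0) :
    ZMod.LFunction Φ 1 = ∑' k : ℕ, ∑ r ∈ range q, tm Φ 1 (q * k + r) := by
  have h1 : Tendsto (fun s : ℝ => ZMod.LFunction Φ s) (𝓝[>] 1) (𝓝 (ZMod.LFunction Φ 1)) := by
    have : Continuous fun s : ℝ => ZMod.LFunction Φ s :=
      (ZMod.differentiable_LFunction_of_sum_zero h0).continuous.comp Complex.continuous_ofReal
    simpa using (this.tendsto 1).mono_left nhdsWithin_le_nhds
  have hev : ∀ᶠ s : ℝ in 𝓝[>] 1, 1 < s ∧ s ≤ 2 := by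
    filter_upwards [Ioc_mem_nhdsGT (show (1:ℝ) < 2 by norm_num)] with s hs using hs
  refine tendsto_nhds_unique h1 ?_
  have h2 : Tendsto (fun s : ℝ => ∑' k : ℕ, ∑ r ∈ range q, tm Φ s (q * k + r)) (𝓝[>] 1)
      (𝓝 (∑' k : ℕ, ∑ r ∈ range q, tm Φ 1 (q * k + r))) := by
    refine tendsto_tsum_of_dominated_convergence
      (summable_bound (q := q) (q * (∑ j, ‖Φ j‖) * (2 * q))) (fun k => ?_) ?_
    · refine tendsto_finsetSum _ fun r _ => ?_
      simp only [tm]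
      have : Continuous fun s : ℝ => Φ ((q * k + r + 1 : ℕ) : ZMod q) *
          (((((q * k + r : ℕ) + 1 : ℝ) ^ (-s)) : ℝ) : ℂ) := by
        refine continuous_const.mul (Complex.continuous_ofReal.comp ?_)
        exact Real.continuous_const_rpow (by positivity) |>.comp continuous_neg
      exact (this.tendsto 1).mono_left nhdsWithin_le_nhds
    · filter_upwards [hev] with s hs k
      exact block_bound Φ h0 hs.1.le hs.2 k
  refine h2.congr' ?_
  filter_upwards [hev] with s hs
  exact (LFunction_eq_block Φ h0 hs.1 hs.2).symm

theorem tendsto_partial (Φ : ZMod q → ℂ) (h0 : ∑ j, Φ j = 0) :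
    Tendsto (fun N : ℕ => ∑ n ∈ range N, Φ ((n + 1 : ℕ) : ZMod q) / ((n + 1 : ℕ) : ℂ)) atTop
      (𝓝 (ZMod.LFunction Φ 1)) := by
  have hq : 0 < q := NeZero.pos q
  have ht : ∀ n, Φ ((n + 1 : ℕ) : ZMod q) / ((n + 1 : ℕ) : ℂ) = tm Φ 1 n := by
    intro n
    rw [tm, Real.rpow_neg_one, div_eq_mul_inv]; push_cast; rfl
  simp only [ht]
  have hdiv : Tendsto (fun N : ℕ => N / q) atTop atTop := Nat.tendsto_div_const_atTop hq.ne'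
  have h1 := (tendsto_block Φ h0 le_rfl one_le_two).comp hdiv
  rw [← LFunction_one_eq_block Φ h0] at h1
  have h2 : Tendsto (fun N : ℕ => ∑ r ∈ range (N % q), tm Φ 1 (q * (N / q) + r)) atTop (𝓝 0) := by
    have hb : Tendsto (fun N : ℕ => (q * ∑ j, ‖Φ j‖) * (1 / (((N / q : ℕ) : ℝ) + 1))) atTop
        (𝓝 0) := by
      simpa using ((tendsto_one_div_add_atTop_nhds_zero_nat (𝕜 := ℝ)).comp hdiv).const_mul
        (q * ∑ j, ‖Φ j‖)
    refine squeeze_zero_norm (fun N => ?_) hb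
    have hC : 0 ≤ ∑ j, ‖Φ j‖ := Finset.sum_nonneg fun _ _ => norm_nonneg _
    calc _ ≤ ∑ r ∈ range (N % q), (∑ j, ‖Φ j‖) * (1 / (((N / q : ℕ) : ℝ) + 1)) := by
          refine (norm_sum_le _ _).trans (Finset.sum_le_sum fun r hr => ?_)
          rw [tm, norm_mul, Complex.norm_real, Real.rpow_neg_one, Real.norm_eq_abs,
            abs_of_nonneg (by positivity), ← one_div]
          refine mul_le_mul ?_ ?_ (by positivity) hC
          · exact Finset.single_le_sum (f := fun j => ‖Φ j‖) (fun _ _ => norm_nonneg _)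
              (Finset.mem_univ _)
          · refine one_div_le_one_div_of_le (by positivity) ?_
            have : N / q ≤ q * (N / q) + r := by nlinarith [Nat.zero_le (N/q)]
            have : ((N / q : ℕ) : ℝ) ≤ ((q * (N / q) + r : ℕ) : ℝ) := by exact_mod_cast this
            linarith
      _ = (N % q : ℕ) * ((∑ j, ‖Φ j‖) * (1 / (((N / q : ℕ) : ℝ) + 1))) := by simp
      _ ≤ q * ((∑ j, ‖Φ j‖) * (1 / (((N / q : ℕ) : ℝ) + 1))) := by
          gcongr
          exact (Nat.mod_lt _ hq).le
      _ = _ := by ring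
  have h3 := h1.add h2
  rw [add_zero] at h3
  refine h3.congr fun N => ?_
  simp only [Function.comp]
  rw [← Finset.sum_range_add, Nat.div_add_mod]

end Lval
end ErdosBaker

namespace ErdosBaker
open NumberField

section Gal
variable {q : ℕ} [NeZero q]

theorem norm_stdAddChar (a : ZMod q) : ‖ZMod.stdAddChar a‖ = 1 := by
  rw [ZMod.stdAddChar_apply]; exact Circle.norm_coe _

theorem one_sub_slit {a : ZMod q} (ha : a ≠ 0) :
    1 - ZMod.stdAddChar a ∈ Complex.slitPlane := by
  rw [Complex.mem_slitPlane_iff]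
  left
  have h1 : (ZMod.stdAddChar a).re ≤ 1 := by
    have := Complex.re_le_norm (ZMod.stdAddChar a)
    rwa [norm_stdAddChar] at this
  rcases h1.lt_or_eq with h | h
  · simpa using h
  · exfalso
    have h2 : (ZMod.stdAddChar a).im = 0 := by
      by_contra hne
      have := Complex.abs_re_lt_norm.2 hne
      rw [h, norm_stdAddChar] at this
      norm_num at this
    have h3 : ZMod.stdAddChar a = 1 := by
      apply Complex.ext
      · simpa using h
      · simpa using h2
    exact ha (ZMod.injective_stdAddChar (by simpa using h3))

theorem LFunction_one_eq_log (Φ : ZMod q → ℂ) (h0 : ∑ j, Φ j = 0) :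
    ZMod.LFunction Φ 1 = - ((q : ℂ)⁻¹ * ∑ a ∈ univ.erase (0 : ZMod q),
      ZMod.dft Φ a * Complex.log (1 - ZMod.stdAddChar a)) := by
  have hd0 : ZMod.dft Φ 0 = 0 := by
    rw [ZMod.dft_apply]; simpa using h0
  have hinv : ∀ n : ZMod q, Φ n = (q : ℂ)⁻¹ * ∑ a ∈ univ.erase (0 : ZMod q),
      ZMod.dft Φ a * ZMod.stdAddChar (a * n) := by
    intro n
    have h1 := ZMod.invDFT_apply (ZMod.dft Φ) n
    rw [LinearEquiv.symm_apply_apply] at h1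
    rw [h1, ← Finset.add_sum_erase _ _ (Finset.mem_univ (0 : ZMod q)), hd0]
    simp [mul_comm]
  have hpart : Tendsto (fun N : ℕ => ∑ n ∈ range N, Φ (n : ZMod q) / (n : ℂ)) atTop
      (𝓝 (ZMod.LFunction Φ 1)) := by
    rw [← tendsto_add_atTop_iff_nat 1]
    refine (tendsto_partial Φ h0).congr fun N => ?_
    rw [Finset.sum_range_succ']
    simp
  have habel := Complex.tendsto_tsum_powerSeries_nhdsWithin_lt hpart
  rw [tendsto_map'_iff] at habel
  refine tendsto_nhds_unique habel ?_
  have hlim : Tendsto (fun x : ℝ => - ((q : ℂ)⁻¹ * ∑ a ∈ univ.erase (0 : ZMod q),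
      ZMod.dft Φ a * Complex.log (1 - ZMod.stdAddChar a * x))) (𝓝[<] 1)
      (𝓝 (- ((q : ℂ)⁻¹ * ∑ a ∈ univ.erase (0 : ZMod q),
      ZMod.dft Φ a * Complex.log (1 - ZMod.stdAddChar a)))) := by
    refine Tendsto.neg (Tendsto.const_mul _ (tendsto_finsetSum _ fun a ha => ?_))
    refine Tendsto.const_mul _ ?_
    have hc : Tendsto (fun x : ℝ => 1 - ZMod.stdAddChar a * (x : ℂ)) (𝓝[<] 1)
        (𝓝 (1 - ZMod.stdAddChar a)) := by
      have : Continuous (fun x : ℝ => 1 - ZMod.stdAddChar a * (x : ℂ)) := by fun_prop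
      simpa using (this.tendsto 1).mono_left nhdsWithin_le_nhds
    exact hc.clog (one_sub_slit (Finset.ne_of_mem_erase ha))
  refine hlim.congr' ?_
  have hev : ∀ᶠ x : ℝ in 𝓝[<] 1, 0 < x ∧ x < 1 := by
    filter_upwards [Ioo_mem_nhdsLT (show (0:ℝ) < 1 by norm_num)] with s hs using hs
  filter_upwards [hev] with x hx
  simp only [Function.comp]
  have hs : HasSum (fun n : ℕ => (q : ℂ)⁻¹ * ∑ a ∈ univ.erase (0 : ZMod q),
      ZMod.dft Φ a * ((ZMod.stdAddChar a * (x : ℂ)) ^ n / n))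
      ((q : ℂ)⁻¹ * ∑ a ∈ univ.erase (0 : ZMod q),
      ZMod.dft Φ a * (- Complex.log (1 - ZMod.stdAddChar a * x))) := by
    refine HasSum.mul_left _ (hasSum_sum fun a _ => HasSum.mul_left _ ?_)
    refine Complex.hasSum_taylorSeries_neg_log ?_
    rw [norm_mul, norm_stdAddChar, one_mul, Complex.norm_real, Real.norm_eq_abs, abs_of_pos hx.1]
    exact hx.2
  have e : (fun n : ℕ => (q : ℂ)⁻¹ * ∑ a ∈ univ.erase (0 : ZMod q),
      ZMod.dft Φ a * ((ZMod.stdAddChar a * (x : ℂ)) ^ n / n))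
      = fun n : ℕ => Φ n / n * (x : ℂ) ^ n := by
    ext n
    rw [hinv n, mul_div_assoc, mul_assoc, div_mul_eq_mul_div, Finset.sum_mul, Finset.sum_div]
    congr 1
    refine Finset.sum_congr rfl fun a _ => ?_
    rw [mul_comm a, ← nsmul_eq_mul, AddChar.map_nsmul_eq_pow, mul_pow]
    ring
  rw [e] at hs
  rw [hs.tsum_eq]
  simp only [mul_neg, Finset.sum_neg_distrib]

theorem exists_cyc_aux (q : ℕ) [NeZero q] (K : Type) [Field K] [NumberField K]
    [IsCyclotomicExtension {q} ℚ K] : ∃ 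
    (σ : K →+* ℂ) (ζ : K), σ ζ = ZMod.stdAddChar (1 : ZMod q) ∧ ζ ^ q = 1 ∧
      ∀ h : (ZMod q)ˣ, ∃ θ : K →+* K, θ ζ = ζ ^ (h : ZMod q).val := by
  obtain ⟨σ⟩ : Nonempty (K →+* ℂ) := inferInstance
  have hz := IsCyclotomicExtension.zeta_spec q ℚ (K)
  set z := IsCyclotomicExtension.zeta q ℚ (K)
  have h1 : (ZMod.stdAddChar (1 : ZMod q)) ^ q = 1 := by
    rw [← AddChar.map_nsmul_eq_pow]; simp
  obtain ⟨i, -, hi⟩ := (hz.map_of_injective σ.injective).eq_pow_of_pow_eq_one h1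
  refine ⟨σ, z ^ i, by rw [map_pow, hi], by rw [← pow_mul, mul_comm, pow_mul, hz.pow_eq_one, one_pow], fun h => ?_⟩
  have hirr : Irreducible (Polynomial.cyclotomic q ℚ) :=
    Polynomial.cyclotomic.irreducible_rat (NeZero.pos q)
  set g := (IsCyclotomicExtension.autEquivPow (K) hirr).symm h with hg
  have hgh : IsCyclotomicExtension.autEquivPow (K) hirr g = h := MulEquiv.apply_symm_apply _ _
  have h2 := IsPrimitiveRoot.autToPow_spec ℚ hz g
  refine ⟨(g : K →+* K), ?_⟩
  have h3 : (IsPrimitiveRoot.autToPow ℚ hz) g = h := hgh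
  rw [h3] at h2
  change g (z ^ i) = _
  rw [map_pow, ← h2, ← pow_mul, ← pow_mul, mul_comm]

theorem exists_cyc (q : ℕ) [NeZero q] : ∃ (K : Type) (_ : Field K) (_ : NumberField K)
    (σ : K →+* ℂ) (ζ : K), σ ζ = ZMod.stdAddChar (1 : ZMod q) ∧ ζ ^ q = 1 ∧
      ∀ h : (ZMod q)ˣ, ∃ θ : K →+* K, θ ζ = ζ ^ (h : ZMod q).val := by
  have : IsCyclotomicExtension {q} ℚ (CyclotomicField q ℚ) :=
    CyclotomicField.isCyclotomicExtension q ℚ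
  exact ⟨CyclotomicField q ℚ, inferInstance, inferInstance, exists_cyc_aux q _⟩

theorem galois_step (F : ZMod q → ℤ) (h0 : ∑ j, F j = 0)
    (h1 : ZMod.LFunction (fun j => (F j : ℂ)) 1 = 0) (h : (ZMod q)ˣ) :
    ZMod.LFunction (fun j => (F ((h : ZMod q) * j) : ℂ)) 1 = 0 := by
  classical
  obtain ⟨K, _, _, σ, ζ, hσ, hζ, hθ⟩ := exists_cyc q
  obtain ⟨θ, hθ⟩ := hθ h⁻¹
  have hq : (q : ℂ) ≠ 0 := by exact_mod_cast NeZero.ne q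
  have hint : IsIntegral ℤ ζ := by
    refine IsIntegral.of_pow (NeZero.pos q) ?_
    rw [hζ]; exact isIntegral_one
  let z : 𝓞 K := ⟨ζ, hint⟩
  have hσpow : ∀ a : ZMod q, σ (ζ ^ a.val) = ZMod.stdAddChar a := by
    intro a
    rw [map_pow, hσ, ← AddChar.map_nsmul_eq_pow]; simp
  let α : ZMod q → 𝓞 K := fun a => if a = 0 then 1 else 1 - z ^ a.val
  let ℓ : ZMod q → ℂ := fun a => if a = 0 then 0 else Complex.log (1 - ZMod.stdAddChar a)
  have hexp : ∀ a, Complex.exp (ℓ a) = σ (α a) := by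
    intro a
    by_cases ha : a = 0
    · simp [ℓ, α, ha]
    · simp only [ℓ, α, ha, if_false]
      rw [Complex.exp_log (Complex.slitPlane_ne_zero (one_sub_slit ha)), ← hσpow]
      have e : algebraMap (𝓞 K) K (1 - z ^ a.val) = 1 - ζ ^ a.val := by
        rw [map_sub, map_one, map_pow (algebraMap (𝓞 K) K)]
        rfl
      exact ((congrArg σ e).trans (by rw [map_sub, map_one])).symm
  let c : ZMod q → K := fun a => ∑ j : ZMod q, ζ ^ (-(j * a)).val * (F j : K)
  have hc : ∀ a, σ (c a) = ZMod.dft (fun j => (F j : ℂ)) a := by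
    intro a
    rw [ZMod.dft_apply, map_sum]
    refine Finset.sum_congr rfl fun j _ => ?_
    rw [map_mul, hσpow, map_intCast]; rfl
  have hc' : ∀ a, σ (θ (c a)) = ZMod.dft (fun j => (F ((h : ZMod q) * j) : ℂ)) a := by
    intro a
    rw [ZMod.dft_apply, map_sum, map_sum]
    refine Fintype.sum_equiv (Units.mulLeft h⁻¹) _ _ fun j => ?_
    rw [map_mul, map_mul, map_intCast, map_intCast, map_pow, hθ, ← pow_mul, map_pow, hσ,
      ← AddChar.map_nsmul_eq_pow]
    simp only [nsmul_eq_mul, Nat.cast_mul, ZMod.natCast_zmod_val, mul_one, Units.mulLeft_apply,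
      Units.mul_inv_cancel_left, smul_eq_mul]
    congr 2
    ring
  have hs0 : ∑ j, (F j : ℂ) = 0 := by exact_mod_cast h0
  have hs0' : ∑ j, (F ((h : ZMod q) * j) : ℂ) = 0 := by
    rw [← hs0]
    exact Fintype.sum_equiv (Units.mulLeft h) _ _ fun j => rfl
  rw [LFunction_one_eq_log _ hs0] at h1
  rw [LFunction_one_eq_log _ hs0']
  have hrel : ∑ a ∈ univ.erase (0 : ZMod q), σ (c a) * ℓ a = 0 := by
    have : ∑ a ∈ univ.erase (0 : ZMod q), σ (c a) * ℓ a = ∑ a ∈ univ.erase (0 : ZMod q),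
      ZMod.dft (fun j => (F j : ℂ)) a * Complex.log (1 - ZMod.stdAddChar a) := by
      refine Finset.sum_congr rfl fun a ha => ?_
      rw [hc]; simp [ℓ, Finset.ne_of_mem_erase ha]
    rw [this]
    simpa [hq] using h1
  have := baker_gal σ θ α ℓ hexp _ c hrel
  have e : ∑ a ∈ univ.erase (0 : ZMod q), σ (θ (c a)) * ℓ a = ∑ a ∈ univ.erase (0 : ZMod q),
      ZMod.dft (fun j => (F ((h : ZMod q) * j) : ℂ)) a * Complex.log (1 - ZMod.stdAddChar a) := by
    refine Finset.sum_congr rfl fun a ha => ?_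
    rw [hc']; simp [ℓ, Finset.ne_of_mem_erase ha]
  rw [← e, this]; simp

theorem sum_zero_of_tendsto (Φ : ZMod q → ℂ) {L : ℂ}
    (h : Tendsto (fun N : ℕ => ∑ n ∈ range N, Φ ((n + 1 : ℕ) : ZMod q) / ((n + 1 : ℕ) : ℂ)) atTop
      (𝓝 L)) : ∑ j, Φ j = 0 := by
  have hq : (q : ℂ) ≠ 0 := by exact_mod_cast NeZero.ne q
  set m : ℂ := (∑ j, Φ j) / q with hm
  have h0 : ∑ j, (Φ j - m) = 0 := by
    rw [Finset.sum_sub_distrib]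
    simp [ZMod.card, hm]; field_simp; simp
  have h2 := h.sub (tendsto_partial (fun j => Φ j - m) h0)
  have h3 : Tendsto (fun N : ℕ => m * ((∑ n ∈ range N, 1 / ((n : ℝ) + 1) : ℝ) : ℂ)) atTop
      (𝓝 (L - ZMod.LFunction (fun j => Φ j - m) 1)) := by
    refine h2.congr fun N => ?_
    rw [← Finset.sum_sub_distrib]
    push_cast
    rw [Finset.mul_sum]
    refine Finset.sum_congr rfl fun n _ => ?_
    ring
  by_contra hne
  have hm0 : m ≠ 0 := div_ne_zero hne hq
  have h4 := (h3.const_mul m⁻¹).norm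
  refine not_tendsto_nhds_of_tendsto_atTop Real.tendsto_sum_range_one_div_nat_succ_atTop _
    (h4.congr fun N => ?_)
  rw [← mul_assoc, inv_mul_cancel₀ hm0, one_mul, Complex.norm_real, Real.norm_eq_abs, abs_of_nonneg]
  exact Finset.sum_nonneg fun n _ => by positivity

end Gal
end ErdosBaker

namespace ErdosBaker

section Chars
variable {q : ℕ} [NeZero q]

/-- numbers all of whose prime factors divide `q` -/
abbrev MM (q : ℕ) : Set ℕ := Nat.factoredNumbers q.primeFactors

theorem MM_coprime {m k : ℕ} (hm : m ∈ MM q) (hk : k.Coprime q) : m.Coprime k := by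
  refine Nat.coprime_of_dvd fun p hp hpm hpk => ?_
  have h1 := Nat.mem_factoredNumbers'.1 hm p hp hpm
  have h2 := Nat.dvd_of_mem_primeFactors h1
  exact hp.one_lt.ne' (Nat.eq_one_of_dvd_coprimes hk hpk h2)

theorem MM_exists (n : ℕ) (hn : n ≠ 0) : ∃ k m, k.Coprime q ∧ m ∈ MM q ∧ k * m = n := by
  induction n using induction_on_primes with
  | zero => exact absurd rfl hn
  | one => exact ⟨1, 1, by simp, by simp [MM, Nat.mem_factoredNumbers], rfl⟩
  | prime_mul p a hp ih =>
    obtain ⟨k, m, hk, hm, rfl⟩ := ih (by rintro rfl; simp at hn)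
    by_cases hpq : p ∣ q
    · refine ⟨k, p * m, hk, Nat.mul_mem_factoredNumbers ?_ hm, by ring⟩
      rw [Nat.mem_factoredNumbers']
      intro r hr hrp
      rw [(Nat.prime_dvd_prime_iff_eq hr hp).1 hrp]
      exact Nat.mem_primeFactors.2 ⟨hp, hpq, NeZero.ne q⟩
    · exact ⟨p * k, m, Nat.Coprime.mul_left ((Nat.Prime.coprime_iff_not_dvd hp).2 hpq) hk, hm, by ring⟩

theorem MM_unique {k m k' m' : ℕ} (hk : k.Coprime q) (hm : m ∈ MM q) (hk' : k'.Coprime q)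
    (hm' : m' ∈ MM q) (h : k * m = k' * m') : k = k' ∧ m = m' := by
  have h1 : m ∣ m' := (MM_coprime hm hk').dvd_of_dvd_mul_left (h ▸ Dvd.intro_left _ rfl)
  have h2 : m' ∣ m := (MM_coprime hm' hk).dvd_of_dvd_mul_left (h.symm ▸ Dvd.intro_left _ rfl)
  have h3 := Nat.dvd_antisymm h1 h2
  subst h3
  exact ⟨Nat.eq_of_mul_eq_mul_right (Nat.pos_of_ne_zero (Nat.ne_zero_of_mem_factoredNumbers hm)) h,
    rfl⟩

open Classical in
/-- restriction to `MM q` -/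
noncomputable def mInd (g : ZMod q → ℂ) (n : ℕ) : ℂ := if n ∈ MM q then g n else 0

theorem conv_eq (ψ : DirichletCharacter ℂ q) (g : ZMod q → ℂ)
    (hg : ∀ (u : (ZMod q)ˣ) n, g (u * n) = ψ u * g n) {n : ℕ} (hn : n ≠ 0) :
    LSeries.convolution (fun n : ℕ => ψ n) (mInd g) n = g n := by
  classical
  obtain ⟨k, m, hk, hm, hkm⟩ := MM_exists (q := q) n hn
  rw [LSeries.convolution_def]
  simp only
  rw [Finset.sum_eq_single_of_mem (k, m) (by simp [hkm, hn])]
  · simp only [mInd, hm, if_true]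
    have := hg (ZMod.unitOfCoprime k hk) m
    rw [ZMod.coe_unitOfCoprime] at this
    rw [← this, ← hkm]; push_cast; rfl
  · rintro ⟨k', m'⟩ hp hne
    simp only [Nat.mem_divisorsAntidiagonal] at hp
    by_cases hk' : k'.Coprime q
    · by_cases hm' : m' ∈ MM q
      · exfalso
        obtain ⟨h1, h2⟩ := MM_unique hk hm hk' hm' (hkm.trans hp.1.symm)
        exact hne (by rw [h1, h2])
      · simp [mInd, hm']
    · have : ψ (k' : ZMod q) = 0 := by
        apply ψ.map_nonunit
        rwa [ZMod.isUnit_iff_coprime]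
      simp [this]

theorem MM_euler (q : ℕ) : Summable (fun m : MM q => ((m : ℕ) : ℝ)⁻¹) ∧
    HasSum (fun m : MM q => ((m : ℕ) : ℝ)⁻¹) (∏ p ∈ q.primeFactors, (1 - (p : ℝ)⁻¹)⁻¹) := by
  let f : ℕ →* ℝ :=
    { toFun := fun n => (n : ℝ)⁻¹
      map_one' := by simp
      map_mul' := fun a b => by push_cast; rw [mul_inv] }
  have h := EulerProduct.summable_and_hasSum_factoredNumbers_prod_filter_prime_geometric (f := f)
    (fun {p} hp => by
      change ‖(p : ℝ)⁻¹‖ < 1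
      rw [norm_inv, Real.norm_natCast]
      exact inv_lt_one_of_one_lt₀ (by exact_mod_cast hp.one_lt)) q.primeFactors
  rw [Finset.filter_true_of_mem (fun p hp => Nat.prime_of_mem_primeFactors hp)] at h
  exact ⟨h.2.summable, h.2⟩

theorem MM_bound_summable : Summable fun n : ℕ => (MM q).indicator (fun n : ℕ => (n : ℝ)⁻¹) n := by
  have := (MM_euler q).1
  exact (summable_subtype_iff_indicator (f := fun n : ℕ => (n : ℝ)⁻¹) (s := MM q)).1 this

theorem term_mInd (g : ZMod q → ℂ) (n : ℕ) : LSeries.term (mInd g) 1 n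
    = (MM q).indicator (fun n : ℕ => g n * (n : ℂ)⁻¹) n := by
  classical
  by_cases hn : n ∈ MM q
  · rw [LSeries.term_of_ne_zero (Nat.ne_zero_of_mem_factoredNumbers hn),
      Set.indicator_of_mem hn, mInd, if_pos hn, Complex.cpow_one, div_eq_mul_inv]
  · rw [Set.indicator_of_notMem hn, LSeries.term]
    simp [mInd, hn]

theorem summable_mInd (g : ZMod q → ℂ) : LSeriesSummable (mInd g) 1 := by
  classical
  refine Summable.of_norm_bounded ((MM_bound_summable (q := q)).mul_left (∑ j, ‖g j‖)) fun n => ?_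
  rw [term_mInd]
  by_cases hn : n ∈ MM q
  · rw [Set.indicator_of_mem hn, Set.indicator_of_mem hn, norm_mul, norm_inv, Complex.norm_natCast]
    gcongr
    exact Finset.single_le_sum (f := fun j => ‖g j‖) (fun _ _ => norm_nonneg _)
              (Finset.mem_univ _)
  · simp [Set.indicator_of_notMem hn]

theorem tendsto_mInd (g : ZMod q → ℂ) :
    Tendsto (fun s : ℝ => LSeries (mInd g) s) (𝓝[>] 1) (𝓝 (LSeries (mInd g) 1)) := by
  refine tendsto_tsum_of_dominated_convergence (summable_mInd g).norm (fun k => ?_) ?_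
  · by_cases hk : k = 0
    · simp [hk]
    · simp only [LSeries.term_of_ne_zero hk]
      have hk' : (k : ℂ) ≠ 0 := by exact_mod_cast hk
      have hc : Continuous fun s : ℝ => mInd g k / (k : ℂ) ^ (s : ℂ) := by
        refine Continuous.div continuous_const ?_ ?_
        · exact (continuous_id.const_cpow (Or.inl hk')).comp Complex.continuous_ofReal
        · intro s; simp [Complex.cpow_eq_zero_iff, hk']
      simpa using (hc.tendsto 1).mono_left nhdsWithin_le_nhds
  · filter_upwards [self_mem_nhdsWithin] with s hs k
    refine LSeries.norm_term_le_of_re_le_re _ ?_ k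
    simpa using (le_of_lt hs)

theorem LSeries_mInd_zero (ψ : DirichletCharacter ℂ q) (g : ZMod q → ℂ)
    (hg : ∀ (u : (ZMod q)ˣ) n, g (u * n) = ψ u * g n) (h0 : ∑ j, g j = 0)
    (h1 : ZMod.LFunction g 1 = 0) : LSeries (mInd g) 1 = 0 := by
  have key : ∀ s : ℝ, 1 < s → ZMod.LFunction g s
      = DirichletCharacter.LFunction ψ s * LSeries (mInd g) s := by
    intro s hs
    have hs' : 1 < (s : ℂ).re := by simpa using hs
    rw [ZMod.LFunction_eq_LSeries g hs', DirichletCharacter.LFunction_eq_LSeries ψ hs',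
      ← LSeries_convolution' (DirichletCharacter.LSeriesSummable_of_one_lt_re ψ hs')
        ((summable_mInd g).of_re_le_re (by simpa using hs.le))]
    exact LSeries_congr (fun {n} hn => (conv_eq ψ g hg hn).symm) _
  have hcoe : Tendsto (fun s : ℝ => (s : ℂ)) (𝓝[>] 1) (𝓝 1) := by
    simpa using (Complex.continuous_ofReal.tendsto 1).mono_left nhdsWithin_le_nhds
  have hl : Tendsto (fun s : ℝ => ZMod.LFunction g s) (𝓝[>] 1) (𝓝 0) := by
    rw [← h1]
    exact ((ZMod.differentiable_LFunction_of_sum_zero h0).continuous.tendsto 1).comp hcoe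
  have hT := tendsto_mInd g
  by_cases hψ : ψ = 1
  · subst hψ
    have hcoe' : Tendsto (fun s : ℝ => (s : ℂ)) (𝓝[>] 1) (𝓝[≠] 1) := by
      refine tendsto_nhdsWithin_iff.2 ⟨hcoe, ?_⟩
      filter_upwards [self_mem_nhdsWithin] with s hs
      have : s ≠ 1 := ne_of_gt hs
      simpa using this
    have hr := (DirichletCharacter.LFunctionTrivChar_residue_one (N := q)).comp hcoe'
    have h2 := hr.mul hT
    have h3 := (hcoe.sub_const 1).mul hl
    rw [mul_zero] at h3
    have h4 := tendsto_nhds_unique (h2.congr' (by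
      filter_upwards [self_mem_nhdsWithin] with s hs
      simp only [Function.comp]
      rw [key s hs, mul_assoc])) h3
    refine (mul_eq_zero.1 h4).resolve_left ?_
    refine Finset.prod_ne_zero_iff.2 fun p hp => ?_
    have hp1 : (p : ℂ) ≠ 1 := by exact_mod_cast (Nat.prime_of_mem_primeFactors hp).one_lt.ne'
    intro h
    exact hp1 (inv_eq_one.1 (sub_eq_zero.1 h).symm)
  · have hr : Tendsto (fun s : ℝ => DirichletCharacter.LFunction ψ s) (𝓝[>] 1)
        (𝓝 (DirichletCharacter.LFunction ψ 1)) :=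
      ((DirichletCharacter.differentiable_LFunction hψ).continuous.tendsto 1).comp hcoe
    have h4 := tendsto_nhds_unique ((hr.mul hT).congr' (by
      filter_upwards [self_mem_nhdsWithin] with s hs
      rw [key s hs])) hl
    exact (mul_eq_zero.1 h4).resolve_left (DirichletCharacter.LFunction_apply_one_ne_zero hψ)

theorem okada (Φ : ZMod q → ℂ) (h0 : ∑ j, Φ j = 0)
    (h : ∀ u : (ZMod q)ˣ, ZMod.LFunction (fun j => Φ ((u : ZMod q) * j)) 1 = 0) :
    LSeries (mInd Φ) 1 = 0 := by
  classical
  set V : (ZMod q)ˣ → ℂ := fun u => LSeries (mInd fun j => Φ ((u : ZMod q) * j)) 1 with hV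
  have h1 : ∀ χ : DirichletCharacter ℂ q, ∑ u : (ZMod q)ˣ, χ u * V u = 0 := by
    intro χ
    set g : ZMod q → ℂ := fun n => ∑ u : (ZMod q)ˣ, χ u * Φ (u * n) with hgdef
    have hg : ∀ (u : (ZMod q)ˣ) n, g (u * n) = χ⁻¹ u * g n := by
      intro v n
      simp only [hgdef]
      rw [Finset.mul_sum]
      refine Fintype.sum_equiv (Equiv.mulRight v) _ _ fun u => ?_
      simp only [Equiv.coe_mulRight, Units.val_mul, map_mul]
      have : χ (v : ZMod q) ≠ 0 := (v.isUnit.map χ).ne_zero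
      rw [MulChar.inv_apply_eq_inv', ← mul_assoc (u : ZMod q)]
      field_simp
    have hg0 : ∑ j, g j = 0 := by
      simp only [hgdef]
      rw [Finset.sum_comm]
      refine Finset.sum_eq_zero fun u _ => ?_
      have e : ∑ j, Φ ((u : ZMod q) * j) = ∑ j, Φ j :=
        Fintype.sum_equiv (Units.mulLeft u) _ Φ (fun j => rfl)
      rw [← Finset.mul_sum, e, h0, mul_zero]
    have hg1 : ZMod.LFunction g 1 = 0 := by
      have : ZMod.LFunction g 1 = ∑ u : (ZMod q)ˣ, χ u * ZMod.LFunction (fun j => Φ ((u : ZMod q) * j)) 1 := by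
        simp only [ZMod.LFunction, hgdef, Finset.mul_sum, Finset.sum_mul]
        rw [Finset.sum_comm]
        refine Finset.sum_congr rfl fun u _ => Finset.sum_congr rfl fun j _ => ?_
        ring
      rw [this]
      exact Finset.sum_eq_zero fun u _ => by rw [h, mul_zero]
    have h2 := LSeries_mInd_zero χ⁻¹ g hg hg0 hg1
    rw [← h2]
    simp only [hV, LSeries]
    have hs := fun u : (ZMod q)ˣ => summable_mInd fun j => Φ ((u : ZMod q) * j)
    rw [← (hasSum_sum fun u _ => ((hs u).hasSum.mul_left (χ u))).tsum_eq]
    congr 1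
    ext n
    simp only [term_mInd]
    by_cases hn : n ∈ MM q
    · simp only [Set.indicator_of_mem hn, hgdef, Finset.sum_mul, mul_assoc]
    · simp [Set.indicator_of_notMem hn]
  have h2 : ∑ χ : DirichletCharacter ℂ q, ∑ u : (ZMod q)ˣ, χ u * V u = 0 :=
    Finset.sum_eq_zero fun χ _ => h1 χ
  rw [Finset.sum_comm] at h2
  simp only [← Finset.sum_mul] at h2
  have h3 : ∀ u : (ZMod q)ˣ, ∑ χ : DirichletCharacter ℂ q, χ (u : ZMod q)
      = if u = 1 then (q.totient : ℂ) else 0 := by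
    intro u
    rw [DirichletCharacter.sum_characters_eq]
    simp
  simp only [h3, ite_mul, zero_mul, Finset.sum_ite_eq', Finset.mem_univ, if_true] at h2
  have h4 : V 1 = 0 := by
    refine (mul_eq_zero.1 h2).resolve_left ?_
    exact_mod_cast (Nat.totient_pos.2 (NeZero.pos q)).ne'
  simpa [hV] using h4

end Chars
end ErdosBaker

namespace ErdosBaker

theorem one_sub_sum_le_prod_aux (s : Finset ℕ) (x : ℕ → ℝ) (h0 : ∀ i ∈ s, 0 ≤ x i)
    (h1 : ∀ i ∈ s, x i ≤ 1) : 1 - ∑ i ∈ s, x i ≤ ∏ i ∈ s, (1 - x i) ∧ ∏ i ∈ s, (1 - x i) ≤ 1 := by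
  classical
  induction s using Finset.induction_on with
  | empty => simp
  | insert a s ha ih =>
    obtain ⟨i1, i2⟩ := ih (fun i hi => h0 i (by simp [hi])) (fun i hi => h1 i (by simp [hi]))
    have a0 := h0 a (by simp)
    have a1 := h1 a (by simp)
    rw [Finset.sum_insert ha, Finset.prod_insert ha]
    have hp : 0 ≤ ∏ i ∈ s, (1 - x i) := Finset.prod_nonneg fun i hi => by
      linarith [h1 i (by simp [hi])]
    constructor <;> nlinarith

theorem euler_le_two (q : ℕ) (hq : 1 < q) (h : q.divisors.card ≤ q.minFac) :
    ∏ p ∈ q.primeFactors, (1 - (p : ℝ)⁻¹)⁻¹ ≤ 2 := by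
  have hq0 : q ≠ 0 := by omega
  have hpow : 2 ^ q.primeFactors.card ≤ q.divisors.card := by
    rw [Nat.card_divisors hq0, ← Finset.prod_const]
    refine Finset.prod_le_prod' fun p hp => ?_
    have : q.factorization p ≠ 0 := by
      rw [← Nat.support_factorization] at hp
      exact Finsupp.mem_support_iff.1 hp
    omega
  have hlin : 2 * q.primeFactors.card ≤ 2 ^ q.primeFactors.card := by
    generalize q.primeFactors.card = w
    cases w with
    | zero => simp
    | succ w => rw [pow_succ]; have := Nat.lt_two_pow_self (n := w); omega
  have hm : 2 * q.primeFactors.card ≤ q.minFac := hlin.trans (hpow.trans h)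
  have hmp : (0 : ℝ) < q.minFac := by exact_mod_cast Nat.minFac_pos q
  have hsum : ∑ p ∈ q.primeFactors, (p : ℝ)⁻¹ ≤ 1 / 2 := by
    calc ∑ p ∈ q.primeFactors, (p : ℝ)⁻¹ ≤ ∑ p ∈ q.primeFactors, (q.minFac : ℝ)⁻¹ := by
          refine Finset.sum_le_sum fun p hp => ?_
          refine inv_anti₀ hmp ?_
          exact_mod_cast Nat.minFac_le_of_dvd (Nat.prime_of_mem_primeFactors hp).two_le
            (Nat.dvd_of_mem_primeFactors hp)
      _ = q.primeFactors.card / q.minFac := by simp [div_eq_mul_inv]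
      _ ≤ 1 / 2 := by
          rw [div_le_div_iff₀ hmp (by norm_num)]
          have : (2 * q.primeFactors.card : ℝ) ≤ q.minFac := by exact_mod_cast hm
          linarith
  have hprod := (one_sub_sum_le_prod_aux q.primeFactors (fun p => (p : ℝ)⁻¹)
    (fun p _ => by positivity) (fun p hp => inv_le_one_of_one_le₀ (by
      exact_mod_cast (Nat.prime_of_mem_primeFactors hp).one_lt.le))).1
  rw [Finset.prod_inv_distrib]
  rw [show (2 : ℝ) = (1 / 2)⁻¹ by norm_num]
  refine inv_anti₀ (by norm_num) ?_
  linarith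

theorem final_ineq (q : ℕ) [NeZero q] (hq : 1 < q) (h : q.divisors.card ≤ q.minFac)
    (Φ : ZMod q → ℂ) (hΦ : ∀ j, ‖Φ j‖ ≤ 1) (hΦ0 : Φ 0 = 0) (hΦ1 : ‖Φ 1‖ = 1)
    (hL : LSeries (mInd Φ) 1 = 0) : False := by
  classical
  have hqr : (0 : ℝ) < q := by exact_mod_cast (by omega : 0 < q)
  have hs : HasSum (fun n => LSeries.term (mInd Φ) 1 n) 0 := by
    rw [← hL]; exact (summable_mInd Φ).hasSum
  have hs2 := hs.sub (hasSum_ite_eq (1 : ℕ) (Φ 1))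
  have hB : HasSum (fun n : ℕ => (MM q).indicator (fun n : ℕ => (n : ℝ)⁻¹) n)
      (∏ p ∈ q.primeFactors, (1 - (p : ℝ)⁻¹)⁻¹) :=
    hasSum_subtype_iff_indicator.1 (MM_euler q).2
  have hB2 := (hB.sub (hasSum_ite_eq (1 : ℕ) (1 : ℝ))).sub (hasSum_ite_eq q (q : ℝ)⁻¹)
  have h1M : 1 ∈ MM q := by simp [MM, Nat.mem_factoredNumbers]
  have hqM : q ∈ MM q := by
    rw [MM, Nat.mem_factoredNumbers']
    intro p hp hpq
    exact Nat.mem_primeFactors.2 ⟨hp, hpq, by omega⟩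
  have hle := hs2.norm_le_of_bounded hB2 (fun n => by
    rw [term_mInd]
    by_cases h1 : n = 1
    · subst h1
      have : (1 : ℕ) ≠ q := by omega
      simp [Set.indicator_of_mem h1M, this]
    · by_cases h2 : n = q
      · subst h2
        simp [Set.indicator_of_mem hqM, h1, hΦ0]
      · by_cases hn : n ∈ MM q
        · simp only [Set.indicator_of_mem hn, h1, h2, if_false, sub_zero, norm_mul, norm_inv,
            Complex.norm_natCast]
          exact mul_le_of_le_one_left (by positivity) (hΦ _)
        · simp [Set.indicator_of_notMem hn, h1, h2])
  rw [zero_sub, norm_neg, hΦ1] at hle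
  have := euler_le_two q hq h
  have : 0 < (q : ℝ)⁻¹ := by positivity
  linarith

end ErdosBaker

theorem erdos_true_minFac_ge_numDivisors (q : ℕ) (hq : 1 < q) (hodd : Odd q)
    (h : q.divisors.card ≤ q.minFac) :
    ErdosConjectureHolds q := by
  rintro ⟨f, ⟨hper, hpm, hz⟩, hlim⟩
  have : NeZero q := ⟨by omega⟩
  have hperk : ∀ n, 1 ≤ n → ∀ k, f (n + q * k) = f n := by
    intro n hn k
    induction k with
    | zero => simp
    | succ k ih => rw [Nat.mul_succ, ← add_assoc, hper _ (by omega), ih]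
  set F : ZMod q → ℤ := fun j => if j = 0 then 0 else f j.val with hF
  have hFn : ∀ n : ℕ, 1 ≤ n → F n = f n := by
    intro n hn
    by_cases hd : q ∣ n
    · rw [hz n hn hd, hF]
      simp [(ZMod.natCast_eq_zero_iff n q).2 hd]
    · have h1 : (n : ZMod q) ≠ 0 := fun h => hd ((ZMod.natCast_eq_zero_iff n q).1 h)
      simp only [hF, h1, if_false, ZMod.val_natCast]
      have h2 : 1 ≤ n % q := Nat.one_le_iff_ne_zero.2 fun h => hd (Nat.dvd_of_mod_eq_zero h)
      rw [← hperk (n % q) h2 (n / q), Nat.mod_add_div]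
  have hlim2 : Tendsto (fun N : ℕ => ∑ n ∈ range N,
      ((F ((n + 1 : ℕ) : ZMod q) : ℤ) : ℂ) / ((n + 1 : ℕ) : ℂ)) atTop (𝓝 0) := by
    have h1 := (Complex.continuous_ofReal.tendsto 0).comp hlim
    simp only [Complex.ofReal_zero] at h1
    refine h1.congr fun N => ?_
    simp only [Function.comp]
    clear hlim h1
    induction N with
    | zero => simp
    | succ N ih =>
      rw [Finset.sum_range_succ, ← ih, Finset.sum_Icc_succ_top (by omega), Complex.ofReal_add,
        hFn (N + 1) (by omega)]
      push_cast
      rfl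
  have hsum : ∑ j, (F j : ℂ) = 0 := ErdosBaker.sum_zero_of_tendsto (fun j => (F j : ℂ)) hlim2
  have hsumZ : ∑ j, F j = 0 := by exact_mod_cast hsum
  have hL1 : ZMod.LFunction (fun j => (F j : ℂ)) 1 = 0 :=
    tendsto_nhds_unique (ErdosBaker.tendsto_partial (fun j => (F j : ℂ)) hsum) hlim2
  have hok := ErdosBaker.okada (fun j => (F j : ℂ)) hsum
    (fun u => ErdosBaker.galois_step F hsumZ hL1 u)
  have hF1 : ∀ j : ZMod q, j ≠ 0 → F j = 1 ∨ F j = -1 := by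
    intro j hj
    simp only [hF, hj, if_false]
    have h1 : j.val ≠ 0 := fun h => hj ((ZMod.val_eq_zero j).1 h)
    exact hpm _ (by omega) fun hd => by
      have := Nat.le_of_dvd (by omega) hd
      have := ZMod.val_lt j
      omega
  have h10 : (1 : ZMod q) ≠ 0 := by
    have : Fact (1 < q) := ⟨hq⟩
    exact one_ne_zero
  refine ErdosBaker.final_ineq q hq h (fun j => (F j : ℂ)) (fun j => ?_) (by simp [hF]) ?_ hok
  · by_cases hj : j = 0
    · simp [hF, hj]
    · rcases hF1 j hj with h | h <;> simp [h]
  · rcases hF1 1 h10 with h | h <;> simp [h]
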